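/- Let (W_n) be a sequence of graphons and let W be a graphon. Then t(F,W_n) converges for every finite simple graph F if and only if (W_n) is a Cauchy sequence in the cut distance δ_□. Furthermore, t(F,W_n) → t(F,W) for every finite simple graph F if and only if δ_□(W_n, W) → 0. -/

import Mathlib

open MeasureTheory Set Filter

/-- The Lebesgue measure restricted to `[0,1]`. -/
noncomputable abbrev μ01 : MeasureTheory.Measure ℝ :=
  MeasureTheory.volume.restrict (Set.Icc (0:ℝ) 1)

/-- A graphon: a symmetric measurable function `[0,1]² → [0,1]`
(defined on all of `ℝ²` for convenience). -/
def IsGraphon (W : ℝ → ℝ → ℝ) : Prop :=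
  Measurable (Function.uncurry W) ∧ (∀ x y, W x y = W y x) ∧ ∀ x y, W x y ∈ Set.Icc (0:ℝ) 1

-- The homomorphism density `t(F,W)` of a finite simple graph `F` in a graphon `W`.
open scoped Classical in
noncomputable def homDensity {n : ℕ} (F : SimpleGraph (Fin n)) (W : ℝ → ℝ → ℝ) : ℝ :=
  ∫ x : Fin n → ℝ,
    (∏ p ∈ Finset.univ.filter (fun p : Fin n × Fin n => p.1 < p.2 ∧ F.Adj p.1 p.2),
      W (x p.1) (x p.2)) ∂(MeasureTheory.Measure.pi fun _ => μ01)

/-- The cut norm `‖U‖_□` of a kernel `U`. -/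
noncomputable def cutNorm (U : ℝ → ℝ → ℝ) : ℝ :=
  sSup { r : ℝ | ∃ S T : Set ℝ, MeasurableSet S ∧ MeasurableSet T ∧
    S ⊆ Set.Icc (0:ℝ) 1 ∧ T ⊆ Set.Icc (0:ℝ) 1 ∧
    r = |∫ x in S, ∫ y in T, U x y| }

/-- An invertible measure preserving map of `[0,1]` onto itself. -/
def IsInvMeasurePreserving (φ : ℝ → ℝ) : Prop :=
  Set.MapsTo φ (Set.Icc (0:ℝ) 1) (Set.Icc (0:ℝ) 1) ∧
  MeasureTheory.MeasurePreserving φ μ01 μ01 ∧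
  ∃ ψ : ℝ → ℝ, Set.MapsTo ψ (Set.Icc (0:ℝ) 1) (Set.Icc (0:ℝ) 1) ∧
    MeasureTheory.MeasurePreserving ψ μ01 μ01 ∧
    (∀ x ∈ Set.Icc (0:ℝ) 1, ψ (φ x) = x) ∧ (∀ x ∈ Set.Icc (0:ℝ) 1, φ (ψ x) = x)

/-- The cut distance `δ_□(U,W)` between two graphons. -/
noncomputable def cutDist (U W : ℝ → ℝ → ℝ) : ℝ :=
  sInf { r : ℝ | ∃ φ : ℝ → ℝ, IsInvMeasurePreserving φ ∧
    r = cutNorm (fun x y => U x y - W (φ x) (φ y)) }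

/-!
Testing `U - W` against the product of the remaining edges, one edge of `F` at a time, shows that
`t(F, ·)` is Lipschitz for the cut distance.

For the converse, approximate both graphons in `L¹` by step functions on the same `N` intervals,
that is, by weighted graphs on `N` vertices. Sample `k` vertices of a weighted graph `B` and then a
random graph `G` on them. If `A` is a step kernel with few steps provided by weak regularity for
`B`, then `G` is typically close to `A` restricted to the sampled points, because the four-cycle
density of their difference controls its cut norm and has small expectation; moreover each step
receives about the right share of the sample. Hence, with probability at least `3/4`, suitably
overlaid blow-ups of `G` and of `B` are close in cut norm. The law of `G` is a fixed linear function
of the densities in `B` of graphs on `k` vertices, so if these nearly agree for two weighted graphs,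
then some `G` represents both, and the two have close blow-ups. Relabelling a blow-up is realised on
`[0,1]` by exchanging intervals of equal length, which is an invertible measure preserving map.
-/

open MeasureTheory Set Filter

section FiniteKernels

open scoped BigOperators

variable {V V' : Type*} [Fintype V] [Fintype V'] {D E : V → V → ℝ} {c d : ℝ}

/-- `CutNormLE D c` says that the cut norm of the matrix `D` of a kernel on the finite set `V` with
uniform weights is at most `c`. The test functions are `[0,1]`-valued; indicators of sets give the
same notion by `CutNormLE.of_indicator`. -/
def CutNormLE (D : V → V → ℝ) (c : ℝ) : Prop :=
  ∀ s t : V → ℝ, (∀ i, s i ∈ Icc (0 : ℝ) 1) → (∀ j, t j ∈ Icc (0 : ℝ) 1) →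
    |𝔼 i, 𝔼 j, D i j * s i * t j| ≤ c

lemma abs_expect_mul_le_of_indicator {ι : Type*} [Fintype ι] {a s : ι → ℝ}
    (ha : ∀ S : Set ι, |𝔼 i, a i * S.indicator 1 i| ≤ c) (hs : ∀ i, s i ∈ Icc (0 : ℝ) 1) :
    |𝔼 i, a i * s i| ≤ c := by
  refine abs_le.2 ⟨(abs_le.1 (ha {i | a i ≤ 0})).1.trans ?_,
    le_trans ?_ (abs_le.1 (ha {i | 0 ≤ a i})).2⟩
  all_goals
    refine Finset.expect_le_expect fun i _ => ?_
    obtain ⟨h0, h1⟩ := hs i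
    simp only [indicator, mem_ofPred_eq, Pi.one_apply]
    split_ifs <;> nlinarith

lemma expect_expect_mul_mul (s t : V → ℝ) :
    𝔼 i, 𝔼 j, D i j * s i * t j = 𝔼 i, (𝔼 j, D i j * t j) * s i := by
  simp only [Finset.expect_mul, mul_right_comm]

namespace CutNormLE

lemma mono (h : CutNormLE D c) (hcd : c ≤ d) : CutNormLE D d :=
  fun s t hs ht => (h s t hs ht).trans hcd

lemma of_indicator
    (h : ∀ S T : Set V, |𝔼 i, 𝔼 j, D i j * S.indicator 1 i * T.indicator 1 j| ≤ c) :
    CutNormLE D c := by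
  intro s t hs ht
  rw [expect_expect_mul_mul]
  refine abs_expect_mul_le_of_indicator (fun S => ?_) hs
  rw [← expect_expect_mul_mul, Finset.expect_comm]
  simp_rw [← Finset.expect_mul]
  refine abs_expect_mul_le_of_indicator (fun T => ?_) ht
  simp_rw [Finset.expect_mul]
  rw [Finset.expect_comm]
  exact h S T

lemma add (hD : CutNormLE D c) (hE : CutNormLE E d) :
    CutNormLE (fun i j => D i j + E i j) (c + d) := by
  intro s t hs ht
  simp only [add_mul, Finset.expect_add_distrib]
  exact (abs_add_le _ _).trans (add_le_add (hD s t hs ht) (hE s t hs ht))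

lemma neg (hD : CutNormLE D c) : CutNormLE (fun i j => -D i j) c := by
  intro s t hs ht
  simp only [neg_mul, Finset.expect_neg_distrib, abs_neg]
  exact hD s t hs ht

lemma comp_equiv (hD : CutNormLE D c) (e : V' ≃ V) : CutNormLE (fun i j => D (e i) (e j)) c := by
  intro s t hs ht
  rw [show 𝔼 i, 𝔼 j, D (e i) (e j) * s i * t j
      = 𝔼 i, 𝔼 j, D i j * s (e.symm i) * t (e.symm j) from
    Fintype.expect_equiv e _ _ fun i => Fintype.expect_equiv e _ _ fun j => by simp]
  exact hD _ _ (fun i => hs _) fun j => ht _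

lemma of_expect_abs (h : 𝔼 i, 𝔼 j, |D i j| ≤ c) : CutNormLE D c := by
  intro s t hs ht
  calc |𝔼 i, 𝔼 j, D i j * s i * t j|
      ≤ 𝔼 i, 𝔼 j, |D i j * s i * t j| :=
        (Finset.abs_expect_le _ _).trans
          (Finset.expect_le_expect fun i _ => Finset.abs_expect_le _ _)
    _ ≤ 𝔼 i, 𝔼 j, |D i j| := by
        refine Finset.expect_le_expect fun i _ => Finset.expect_le_expect fun j _ => ?_
        rw [abs_mul, abs_mul, abs_of_nonneg (hs i).1, abs_of_nonneg (ht j).1]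
        exact mul_le_of_le_one_right (by have := (hs i).1; positivity) (ht j).2 |>.trans
          (mul_le_of_le_one_right (abs_nonneg _) (hs i).2)
    _ ≤ c := h

lemma abs_expect_le (h : CutNormLE D c) {s t : V → ℝ} (hs : ∀ i, |s i| ≤ 1)
    (ht : ∀ j, |t j| ≤ 1) : |𝔼 i, 𝔼 j, D i j * s i * t j| ≤ 4 * c := by
  have hpos : ∀ {x : ℝ}, |x| ≤ 1 → x⁺ ∈ Icc (0 : ℝ) 1 := fun hx =>
    ⟨posPart_nonneg _, sup_le ((le_abs_self _).trans hx) zero_le_one⟩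
  have hneg : ∀ {x : ℝ}, |x| ≤ 1 → x⁻ ∈ Icc (0 : ℝ) 1 := fun hx => by
    rw [← posPart_neg]; exact hpos (by rwa [abs_neg])
  have key := fun u v hu hv => abs_le.1 (h u v hu hv)
  have h₁ := key _ _ (fun i => hpos (hs i)) fun j => hpos (ht j)
  have h₂ := key _ _ (fun i => hpos (hs i)) fun j => hneg (ht j)
  have h₃ := key _ _ (fun i => hneg (hs i)) fun j => hpos (ht j)
  have h₄ := key _ _ (fun i => hneg (hs i)) fun j => hneg (ht j)
  have hsplit : 𝔼 i, 𝔼 j, D i j * s i * t j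
      = 𝔼 i, 𝔼 j, D i j * (s i)⁺ * (t j)⁺ - 𝔼 i, 𝔼 j, D i j * (s i)⁺ * (t j)⁻
        - 𝔼 i, 𝔼 j, D i j * (s i)⁻ * (t j)⁺ + 𝔼 i, 𝔼 j, D i j * (s i)⁻ * (t j)⁻ := by
    simp only [← Finset.expect_sub_distrib, ← Finset.expect_add_distrib]
    refine Finset.expect_congr rfl fun i _ => Finset.expect_congr rfl fun j _ => ?_
    conv_lhs => rw [← posPart_sub_negPart (s i), ← posPart_sub_negPart (t j)]
    ring
  rw [hsplit, abs_le]
  constructor <;> linarith [h₁.1, h₁.2, h₂.1, h₂.2, h₃.1, h₃.2, h₄.1, h₄.2]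

lemma comp_fst (h : CutNormLE D c) (K : Type*) [Fintype K] [Nonempty K] :
    CutNormLE (fun u v : V × K => D u.1 v.1) c := by
  intro s t hs ht
  have havg : ∀ {r : V × K → ℝ}, (∀ u, r u ∈ Icc (0 : ℝ) 1) → ∀ i, 𝔼 a, r (i, a) ∈ Icc (0 : ℝ) 1 :=
    fun hr i => ⟨Finset.expect_nonneg fun a _ => (hr _).1,
      Finset.expect_le Finset.univ_nonempty fun a _ => (hr _).2⟩
  convert h (fun i => 𝔼 a, s (i, a)) (fun j => 𝔼 b, t (j, b)) (havg hs) (havg ht) using 2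
  simp only [← Finset.univ_product_univ, Finset.expect_product, Finset.mul_expect,
    Finset.expect_mul]
  refine Finset.expect_congr rfl fun i _ => ?_
  rw [Finset.expect_comm]
  refine Finset.expect_congr rfl fun j _ => ?_
  rw [Finset.expect_comm]

end CutNormLE

end FiniteKernels

section FourCycles

open scoped BigOperators

variable {V : Type*} [Fintype V] {D : V → V → ℝ} {c : ℝ}

/-- The homomorphism density of the four-cycle in a (not necessarily symmetric) kernel `D`, each
row of which is joined to each column. Its fourth root is equivalent to the cut norm for kernels
bounded by one. -/
noncomputable def fourCycleDensity (D : V → V → ℝ) : ℝ :=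
  𝔼 j, 𝔼 j', (𝔼 i, D i j * D i j') ^ 2

lemma fourCycleDensity_nonneg (D : V → V → ℝ) : 0 ≤ fourCycleDensity D :=
  Finset.expect_nonneg fun _ _ => Finset.expect_nonneg fun _ _ => sq_nonneg _

lemma fourCycleDensity_eq (D : V → V → ℝ) :
    fourCycleDensity D = 𝔼 j, 𝔼 j', 𝔼 i, 𝔼 i', D i j * D i j' * D i' j * D i' j' := by
  simp only [fourCycleDensity, sq, Finset.expect_mul_expect, mul_assoc]

lemma sq_expect_mul_le {ι : Type*} [Fintype ι] [Nonempty ι] {s : ι → ℝ} (hs : ∀ i, |s i| ≤ 1)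
    (f : ι → ℝ) : (𝔼 i, f i * s i) ^ 2 ≤ 𝔼 i, f i ^ 2 :=
  (Finset.expect_mul_sq_le_sq_mul_sq _ _ _).trans <|
    mul_le_of_le_one_right (Finset.expect_nonneg fun _ _ => sq_nonneg _) <|
      Finset.expect_le Finset.univ_nonempty fun i _ => (sq_le_one_iff_abs_le_one _).2 (hs i)

lemma expect_pow_four_le_fourCycleDensity [Nonempty V] (D : V → V → ℝ) {s t : V → ℝ}
    (hs : ∀ i, |s i| ≤ 1) (ht : ∀ j, |t j| ≤ 1) :
    (𝔼 i, 𝔼 j, D i j * s i * t j) ^ 4 ≤ fourCycleDensity D := by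
  have rows : (𝔼 i, 𝔼 j, D i j * s i * t j) ^ 2 ≤ 𝔼 i, (𝔼 j, D i j * t j) ^ 2 := by
    rw [expect_expect_mul_mul]
    exact sq_expect_mul_le hs _
  have swap : 𝔼 i, (𝔼 j, D i j * t j) ^ 2
      = 𝔼 p : V × V, (𝔼 i, D i p.1 * D i p.2) * (t p.1 * t p.2) := by
    simp only [← Finset.univ_product_univ, Finset.expect_product, Finset.expect_mul]
    simp only [sq, Finset.expect_mul_expect]
    rw [Finset.expect_comm]
    refine Finset.expect_congr rfl fun j _ => ?_
    rw [Finset.expect_comm]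
    exact Finset.expect_congr rfl fun j' _ => Finset.expect_congr rfl fun i _ => by ring
  have columns : (𝔼 i, (𝔼 j, D i j * t j) ^ 2) ^ 2 ≤ fourCycleDensity D := by
    rw [swap]
    refine (sq_expect_mul_le (fun p => ?_) _).trans_eq ?_
    · rw [abs_mul]
      exact mul_le_one₀ (ht _) (abs_nonneg _) (ht _)
    · simp only [← Finset.univ_product_univ, Finset.expect_product, fourCycleDensity]
  calc (𝔼 i, 𝔼 j, D i j * s i * t j) ^ 4 = ((𝔼 i, 𝔼 j, D i j * s i * t j) ^ 2) ^ 2 := by ring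
    _ ≤ (𝔼 i, (𝔼 j, D i j * t j) ^ 2) ^ 2 := pow_le_pow_left₀ (sq_nonneg _) rows 2
    _ ≤ fourCycleDensity D := columns

lemma CutNormLE.of_fourCycleDensity_le [Nonempty V] (hc : 0 ≤ c)
    (h : fourCycleDensity D ≤ c ^ 4) : CutNormLE D c := by
  intro s t hs ht
  have habs : ∀ {r : V → ℝ}, (∀ i, r i ∈ Icc (0 : ℝ) 1) → ∀ i, |r i| ≤ 1 := fun hr i => by
    rw [abs_of_nonneg (hr i).1]; exact (hr i).2
  refine le_of_pow_le_pow_left₀ four_ne_zero hc ?_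
  rw [Even.pow_abs (by decide)]
  exact (expect_pow_four_le_fourCycleDensity D (habs hs) (habs ht)).trans h

-- Fixing the edge `i' j'` of the cycle leaves the pairing of `D` with its own row and column.
lemma CutNormLE.fourCycleDensity_le [Nonempty V] (h : CutNormLE D c) (hD : ∀ i j, |D i j| ≤ 1) :
    fourCycleDensity D ≤ 4 * c := by
  have hexp : fourCycleDensity D
      = 𝔼 j', 𝔼 i', D i' j' * 𝔼 i, 𝔼 j, D i j * D i j' * D i' j := by
    rw [fourCycleDensity_eq, Finset.expect_comm]
    refine Finset.expect_congr rfl fun j' _ => ?_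
    simp only [Finset.mul_expect]
    rw [Finset.expect_comm]
    simp only [Finset.expect_comm (s := Finset.univ (α := V)) (t := Finset.univ (α := V))
      (f := fun j i' => D _ j * _ * D i' j * _)]
    rw [Finset.expect_comm]
    exact Finset.expect_congr rfl fun i' _ => Finset.expect_congr rfl fun i _ =>
      Finset.expect_congr rfl fun j _ => by ring
  rw [hexp]
  refine Finset.expect_le Finset.univ_nonempty fun j' _ =>
    Finset.expect_le Finset.univ_nonempty fun i' _ => (le_abs_self _).trans ?_
  rw [abs_mul]
  exact (mul_le_of_le_one_left (abs_nonneg _) (hD _ _)).trans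
    (h.abs_expect_le (fun i => hD _ _) fun j => hD _ _)

end FourCycles

section WeakRegularity

open scoped BigOperators

/-- A finite weighted graph: a symmetric matrix of edge weights in `[0,1]`, loops allowed. -/
structure IsWeightedGraph {V : Type*} (B : V → V → ℝ) : Prop where
  symm : ∀ i j, B i j = B j i
  mem_Icc : ∀ i j, B i j ∈ Icc (0 : ℝ) 1

lemma IsWeightedGraph.comp {V V' : Type*} {B : V → V → ℝ} (hB : IsWeightedGraph B) (f : V' → V) :
    IsWeightedGraph fun i j => B (f i) (f j) :=
  ⟨fun _ _ => hB.symm _ _, fun _ _ => hB.mem_Icc _ _⟩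

lemma sq_sub_clamp_le {b : ℝ} (hb : b ∈ Icc (0 : ℝ) 1) (z : ℝ) :
    (b - max 0 (min 1 z)) ^ 2 ≤ (b - z) ^ 2 := by
  obtain ⟨hb0, hb1⟩ := hb
  rcases le_total 1 z with h | h
  · rw [min_eq_left h, max_eq_right zero_le_one]; nlinarith
  · rw [min_eq_right h]
    rcases le_total 0 z with h' | h'
    · rw [max_eq_right h']
    · rw [max_eq_left h']; nlinarith

variable {V : Type*} [Fintype V] {B : V → V → ℝ} {ε : ℝ}

-- The coefficient `m / 2` minimises the resulting quadratic upper bound `-4 c m + 4 c ^ 2`.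
lemma expect_sq_sub_cut_le [Nonempty V] {D : V → V → ℝ} (hD : ∀ i j, D i j = D j i) (S T : Set V)
    {m : ℝ} (hm : 𝔼 i, 𝔼 j, D i j * S.indicator 1 i * T.indicator 1 j = m) :
    𝔼 i, 𝔼 j, (D i j - m / 2 *
        (S.indicator 1 i * T.indicator 1 j + S.indicator 1 j * T.indicator 1 i)) ^ 2
      ≤ 𝔼 i, 𝔼 j, D i j ^ 2 - m ^ 2 := by
  have hm' : 𝔼 i, 𝔼 j, D i j * S.indicator 1 j * T.indicator 1 i = m := by
    rw [← hm, Finset.expect_comm]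
    simp only [hD]
  have hind : ∀ (R : Set V) i, R.indicator (1 : V → ℝ) i ∈ Icc (0 : ℝ) 1 := fun R i =>
    ⟨indicator_nonneg (fun _ _ => zero_le_one) i, indicator_le_self' (fun _ _ => zero_le_one) i⟩
  have hle : ∀ i j, S.indicator (1 : V → ℝ) i * T.indicator (1 : V → ℝ) j ≤ 1 := fun i j =>
    mul_le_one₀ (hind S i).2 (hind T j).1 (hind T j).2
  have hnonneg : ∀ i j, 0 ≤ S.indicator (1 : V → ℝ) i * T.indicator (1 : V → ℝ) j := fun i j =>
    mul_nonneg (hind S i).1 (hind T j).1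
  calc _ ≤ 𝔼 i, 𝔼 j, (D i j ^ 2 - m * (D i j * S.indicator 1 i * T.indicator 1 j)
          - m * (D i j * S.indicator 1 j * T.indicator 1 i) + m ^ 2) := by
        refine Finset.expect_le_expect fun i _ => Finset.expect_le_expect fun j _ => ?_
        have hsq : (S.indicator (1 : V → ℝ) i * T.indicator (1 : V → ℝ) j
            + S.indicator 1 j * T.indicator 1 i) ^ 2 ≤ 2 ^ 2 :=
          pow_le_pow_left₀ (add_nonneg (hnonneg i j) (hnonneg j i))
            (by linarith [hle i j, hle j i]) 2
        nlinarith [mul_le_mul_of_nonneg_left hsq (sq_nonneg m)]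
    _ = 𝔼 i, 𝔼 j, D i j ^ 2 - m ^ 2 := by
        simp only [Finset.expect_add_distrib, Finset.expect_sub_distrib, ← Finset.mul_expect, hm,
          hm', Fintype.expect_const]
        ring

lemma exists_energy_decrement [Nonempty V] (hB : IsWeightedGraph B) (hε : 0 ≤ ε) {ι : Type}
    {p : V → ι} {A : ι → ι → ℝ} (hA : IsWeightedGraph A)
    (hcut : ¬ CutNormLE (fun i j => B i j - A (p i) (p j)) ε) :
    ∃ (p' : V → ι × Bool × Bool) (A' : ι × Bool × Bool → ι × Bool × Bool → ℝ),
      IsWeightedGraph A' ∧ 𝔼 i, 𝔼 j, (B i j - A' (p' i) (p' j)) ^ 2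
        ≤ 𝔼 i, 𝔼 j, (B i j - A (p i) (p j)) ^ 2 - ε ^ 2 := by
  classical
  obtain ⟨S, T, hST⟩ : ∃ S T : Set V, ε <
      |𝔼 i, 𝔼 j, (B i j - A (p i) (p j)) * S.indicator 1 i * T.indicator 1 j| := by
    by_contra! hle
    exact hcut (.of_indicator hle)
  set m := 𝔼 i, 𝔼 j, (B i j - A (p i) (p j)) * S.indicator 1 i * T.indicator 1 j with hm
  let χ : Bool → Bool → ℝ := fun a b => a.toNat * b.toNat
  have hχ : ∀ i j, χ (decide (i ∈ S)) (decide (j ∈ T)) = S.indicator 1 i * T.indicator 1 j := by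
    intro i j
    by_cases hi : i ∈ S <;> by_cases hj : j ∈ T <;> simp [χ, hi, hj]
  refine ⟨fun v => (p v, decide (v ∈ S), decide (v ∈ T)), fun a b =>
    max 0 (min 1 (A a.1 b.1 + m / 2 * (χ a.2.1 b.2.2 + χ b.2.1 a.2.2))), ⟨fun a b => ?_,
      fun a b => ⟨le_max_left _ _, max_le zero_le_one (min_le_left _ _)⟩⟩, ?_⟩
  · rw [hA.symm a.1 b.1, add_comm (χ a.2.1 b.2.2)]
  · calc _ ≤ 𝔼 i, 𝔼 j, (B i j - A (p i) (p j) - m / 2 *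
            (S.indicator 1 i * T.indicator 1 j + S.indicator 1 j * T.indicator 1 i)) ^ 2 := by
          refine Finset.expect_le_expect fun i _ => Finset.expect_le_expect fun j _ => ?_
          refine (sq_sub_clamp_le (hB.mem_Icc i j) _).trans_eq ?_
          rw [hχ, hχ, sub_sub]
      _ ≤ 𝔼 i, 𝔼 j, (B i j - A (p i) (p j)) ^ 2 - m ^ 2 :=
          expect_sq_sub_cut_le (fun i j => by rw [hB.symm, hA.symm]) S T hm.symm
      _ ≤ _ := by
          gcongr ?_ - ?_
          rw [← sq_abs m]
          exact pow_le_pow_left₀ hε hST.le 2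

lemma exists_cutNormLE_or_energy_le [Nonempty V] (hB : IsWeightedGraph B) (hε : 0 ≤ ε) (J : ℕ) :
    ∃ (ι : Type) (_ : Fintype ι) (p : V → ι) (A : ι → ι → ℝ),
      Fintype.card ι ≤ 4 ^ J ∧ IsWeightedGraph A ∧
      (CutNormLE (fun i j => B i j - A (p i) (p j)) ε ∨
        𝔼 i, 𝔼 j, (B i j - A (p i) (p j)) ^ 2 ≤ 1 - J * ε ^ 2) := by
  induction J with
  | zero =>
    refine ⟨Unit, inferInstance, fun _ => (), fun _ _ => 0, by simp, ⟨by simp, by simp⟩, .inr ?_⟩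
    simp only [sub_zero, Nat.cast_zero, zero_mul]
    exact Finset.expect_le Finset.univ_nonempty fun i _ => Finset.expect_le Finset.univ_nonempty
      fun j _ => pow_le_one₀ (hB.mem_Icc i j).1 (hB.mem_Icc i j).2
  | succ J ih =>
    obtain ⟨ι, _, p, A, hcard, hA, hp⟩ := ih
    by_cases hcut : CutNormLE (fun i j => B i j - A (p i) (p j)) ε
    · exact ⟨ι, inferInstance, p, A, hcard.trans (Nat.pow_le_pow_right (by norm_num) J.le_succ),
        hA, .inl hcut⟩
    · obtain ⟨p', A', hA', hle⟩ := exists_energy_decrement hB hε hA hcut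
      refine ⟨_, inferInstance, p', A', ?_, hA', .inr ?_⟩
      · simp only [Fintype.card_prod, Fintype.card_bool, pow_succ]
        omega
      · push_cast
        linarith [hp.resolve_left hcut]

theorem frieze_kannan_weak_regularity [Nonempty V] (hB : IsWeightedGraph B) (hε : 0 ≤ ε) {J : ℕ}
    (hJ : 1 < J * ε ^ 2) :
    ∃ (ι : Type) (_ : Fintype ι) (p : V → ι) (A : ι → ι → ℝ),
      Fintype.card ι ≤ 4 ^ J ∧ IsWeightedGraph A ∧
      CutNormLE (fun i j => B i j - A (p i) (p j)) ε := by
  obtain ⟨ι, _, p, A, hcard, hA, hp⟩ := exists_cutNormLE_or_energy_le hB hε J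
  refine ⟨ι, inferInstance, p, A, hcard, hA, hp.resolve_right fun hle => ?_⟩
  have : 0 ≤ 𝔼 i, 𝔼 j, (B i j - A (p i) (p j)) ^ 2 :=
    Finset.expect_nonneg fun _ _ => Finset.expect_nonneg fun _ _ => sq_nonneg _
  linarith

end WeakRegularity

section Relabelling

open scoped BigOperators

lemma exists_perm_forall_ne {L ι : Type*} [Finite L] (P R : L → ι) :
    ∃ σ : Equiv.Perm L, ∀ u v, P u ≠ R (σ u) → P v ≠ R (σ v) → P u ≠ R (σ v) := by
  classical
  cases nonempty_fintype L
  obtain ⟨σ, -, hσ⟩ := Finset.exists_min_image (Finset.univ : Finset (Equiv.Perm L))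
    (fun σ => (Finset.univ.filter fun u => P u ≠ R (σ u)).card) ⟨1, Finset.mem_univ _⟩
  refine ⟨σ, fun u v hu hv huv => ?_⟩
  -- Otherwise swapping the images of `u` and `v` would repair `u` without spoiling anything.
  have hlt : (Finset.univ.filter fun w => P w ≠ R ((Equiv.swap u v).trans σ w)).card
      < (Finset.univ.filter fun w => P w ≠ R (σ w)).card := by
    refine Finset.card_lt_card ((Finset.ssubset_iff_of_subset fun w hw => ?_).2
      ⟨u, by simpa using hu, fun hw => (Finset.mem_filter.1 hw).2 (by simpa using huv)⟩)
    have hw := (Finset.mem_filter.1 hw).2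
    refine Finset.mem_filter.2 ⟨Finset.mem_univ _, ?_⟩
    obtain rfl | hwu := eq_or_ne w u
    · exact hu
    obtain rfl | hwv := eq_or_ne w v
    · exact hv
    rwa [Equiv.trans_apply, Equiv.swap_apply_of_ne_of_ne hwu hwv] at hw
  exact absurd (hσ _ (Finset.mem_univ _)) (not_le.2 hlt)

variable {L ι : Type*} [Fintype L] [DecidableEq ι]

lemma expect_ne_le_sum_abs [Fintype ι] {P R : L → ι}
    (h : ∀ u v, P u ≠ R u → P v ≠ R v → P u ≠ R v) :
    𝔼 u, (if P u ≠ R u then 1 else 0 : ℝ)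
      ≤ ∑ a, |𝔼 u, (if P u = a then 1 else 0 : ℝ) - 𝔼 u, (if R u = a then 1 else 0 : ℝ)| := by
  have hsum : 𝔼 u, (if P u ≠ R u then 1 else 0 : ℝ)
      = ∑ a, 𝔼 u, (if P u = a ∧ P u ≠ R u then 1 else 0 : ℝ) := by
    rw [← Finset.expect_sum_comm]
    exact Finset.expect_congr rfl fun u _ => by simp [ite_and]
  rw [hsum]
  refine Finset.sum_le_sum fun a _ => ?_
  have hdiff : 𝔼 u, (if P u = a then 1 else 0 : ℝ) - 𝔼 u, (if R u = a then 1 else 0 : ℝ)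
      = 𝔼 u, (if P u = a ∧ P u ≠ R u then 1 else 0 : ℝ)
        - 𝔼 u, (if R u = a ∧ P u ≠ R u then 1 else 0 : ℝ) := by
    simp only [← Finset.expect_sub_distrib]
    refine Finset.expect_congr rfl fun u _ => ?_
    by_cases hu : P u = R u <;> simp [hu]
  rw [hdiff]
  by_cases ha : ∃ u, P u = a ∧ P u ≠ R u
  · obtain ⟨u, hua, hu⟩ := ha
    have hR : 𝔼 v, (if R v = a ∧ P v ≠ R v then 1 else 0 : ℝ) = 0 :=
      Finset.expect_eq_zero fun v _ => if_neg fun hv => h u v hu hv.2 (hua.trans hv.1.symm)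
    rw [hR, sub_zero]
    exact le_abs_self _
  · have hP : 𝔼 v, (if P v = a ∧ P v ≠ R v then 1 else 0 : ℝ) = 0 :=
      Finset.expect_eq_zero fun v _ => if_neg fun hv => ha ⟨v, hv⟩
    rw [hP]
    exact abs_nonneg _

lemma exists_perm_expect_ne_le [Fintype ι] (P R : L → ι) :
    ∃ σ : Equiv.Perm L, 𝔼 u, (if P u ≠ R (σ u) then 1 else 0 : ℝ)
      ≤ ∑ a, |𝔼 u, (if P u = a then 1 else 0 : ℝ) - 𝔼 u, (if R u = a then 1 else 0 : ℝ)| := by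
  obtain ⟨σ, hσ⟩ := exists_perm_forall_ne P R
  refine ⟨σ, (expect_ne_le_sum_abs hσ).trans_eq <| Finset.sum_congr rfl fun a _ => ?_⟩
  rw [Fintype.expect_equiv σ (fun u => if R (σ u) = a then (1 : ℝ) else 0)
    (fun u => if R u = a then 1 else 0) fun _ => rfl]

lemma IsWeightedGraph.abs_sub_le_one {V : Type*} {B : V → V → ℝ} (hB : IsWeightedGraph B)
    (i j : V) {b : ℝ} (hb : b ∈ Icc (0 : ℝ) 1) : |b - B i j| ≤ 1 :=
  abs_sub_le_of_nonneg_of_le hb.1 hb.2 (hB.mem_Icc i j).1 (hB.mem_Icc i j).2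

lemma IsWeightedGraph.cutNormLE_relabel [Nonempty L] {A : ι → ι → ℝ} (hA : IsWeightedGraph A)
    (P R : L → ι) : CutNormLE (fun u v => A (P u) (P v) - A (R u) (R v))
      (2 * 𝔼 u, (if P u ≠ R u then 1 else 0 : ℝ)) := by
  refine .of_expect_abs ?_
  calc 𝔼 u, 𝔼 v, |A (P u) (P v) - A (R u) (R v)|
      ≤ 𝔼 u, 𝔼 v, ((if P u ≠ R u then 1 else 0 : ℝ) + (if P v ≠ R v then 1 else 0 : ℝ)) := by
        refine Finset.expect_le_expect fun u _ => Finset.expect_le_expect fun v _ => ?_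
        have hone := hA.abs_sub_le_one (R u) (R v) (hA.mem_Icc (P u) (P v))
        by_cases hu : P u = R u <;> by_cases hv : P v = R v <;> simp [hu, hv] at hone ⊢ <;> linarith
    _ = _ := by
        simp only [Finset.expect_add_distrib, Fintype.expect_const]
        ring

end Relabelling

section Resampling

open scoped BigOperators

variable {κ V : Type*} [Fintype κ] [DecidableEq κ] [Fintype V] [Nonempty V]

lemma expect_update (k : κ) (g : (κ → V) → ℝ) :
    𝔼 x, 𝔼 v, g (Function.update x k v) = 𝔼 x, g x := by
  calc 𝔼 x, 𝔼 v, g (Function.update x k v) = 𝔼 x, 𝔼 _v : V, g x := by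
        simp only [← Finset.expect_product', Finset.univ_product_univ]
        refine Finset.expect_nbij' (fun p => (Function.update p.1 k p.2, p.1 k))
          (fun p => (Function.update p.1 k p.2, p.1 k)) ?_ ?_ ?_ ?_ ?_ <;> simp
    _ = 𝔼 x, g x := by simp only [Fintype.expect_const]

lemma expect_apply_two {i j : κ} (hij : i ≠ j) (g : V → V → ℝ) :
    𝔼 x : κ → V, g (x i) (x j) = 𝔼 a, 𝔼 b, g a b := by
  rw [← expect_update j, ← expect_update i]
  simp only [Function.update_self, ne_eq, hij, not_false_eq_true, Function.update_of_ne,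
    Fintype.expect_const]

lemma expect_apply_four (g : V → V → V → V → ℝ) {i j k l : κ} (hij : i ≠ j) (hik : i ≠ k)
    (hil : i ≠ l) (hjk : j ≠ k) (hjl : j ≠ l) (hkl : k ≠ l) :
    𝔼 x : κ → V, g (x i) (x j) (x k) (x l) = 𝔼 a, 𝔼 b, 𝔼 c, 𝔼 d, g a b c d := by
  rw [← expect_update l, ← expect_update k, ← expect_update j, ← expect_update i]
  simp only [Function.update_self, ne_eq, hij, hik, hil, hjk, hjl, hkl, not_false_eq_true,
    Function.update_of_ne, Fintype.expect_const]

end Resampling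

section RandomSubsets

variable {α : Type*} [DecidableEq α] {s T : Finset α} {w : α → ℝ}

/-- The probability that the random subset of `s` containing each `e ∈ s` independently with
probability `w e` equals `G`. -/
def bernoulliWeight (s : Finset α) (w : α → ℝ) (G : Finset α) : ℝ :=
  (∏ e ∈ G, w e) * ∏ e ∈ s \ G, (1 - w e)

lemma bernoulliWeight_nonneg (hw : ∀ e, w e ∈ Icc (0 : ℝ) 1) (s G : Finset α) :
    0 ≤ bernoulliWeight s w G :=
  mul_nonneg (Finset.prod_nonneg fun e _ => (hw e).1)
    (Finset.prod_nonneg fun e _ => sub_nonneg.2 (hw e).2)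

lemma sum_bernoulliWeight_mul_prod_ite (s : Finset α) (w φ ψ : α → ℝ) :
    ∑ G ∈ s.powerset, bernoulliWeight s w G * ∏ e ∈ s, (if e ∈ G then φ e else ψ e)
      = ∏ e ∈ s, (w e * φ e + (1 - w e) * ψ e) := by
  rw [Finset.prod_add]
  refine Finset.sum_congr rfl fun G hG => ?_
  rw [Finset.mem_powerset] at hG
  rw [← Finset.prod_sdiff hG, Finset.prod_congr rfl fun e he => if_neg (Finset.mem_sdiff.1 he).2,
    Finset.prod_congr rfl fun e (he : e ∈ G) => if_pos he, bernoulliWeight,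
    Finset.prod_mul_distrib, Finset.prod_mul_distrib]
  ring

lemma sum_bernoulliWeight (s : Finset α) (w : α → ℝ) :
    ∑ G ∈ s.powerset, bernoulliWeight s w G = 1 := by
  simpa using sum_bernoulliWeight_mul_prod_ite s w 1 1

lemma sum_bernoulliWeight_mul_prod_sub (hT : T ⊆ s) (w a : α → ℝ) :
    ∑ G ∈ s.powerset, bernoulliWeight s w G * ∏ e ∈ T, ((if e ∈ G then 1 else 0) - a e)
      = ∏ e ∈ T, (w e - a e) := by
  have hprod : ∀ f : α → ℝ, ∏ e ∈ T, f e = ∏ e ∈ s, (if e ∈ T then f e else 1) := fun f => by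
    rw [Finset.prod_ite_mem, Finset.inter_eq_right.2 hT]
  simp only [hprod]
  convert sum_bernoulliWeight_mul_prod_ite s w (fun e => if e ∈ T then 1 - a e else 1)
    (fun e => if e ∈ T then 0 - a e else 1) using 4 with G _ e _ e _
  · split_ifs <;> rfl
  · split_ifs <;> ring

lemma bernoulliWeight_eq_sum (s : Finset α) (w : α → ℝ) (G : Finset α) :
    bernoulliWeight s w G = ∑ T ∈ (s \ G).powerset, (-1) ^ T.card * ∏ e ∈ G ∪ T, w e := by
  have hsub : ∀ e, 1 - w e = -w e + 1 := fun e => by ring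
  simp only [bernoulliWeight, hsub]
  rw [Finset.prod_add, Finset.mul_sum]
  refine Finset.sum_congr rfl fun T hT => ?_
  have hGT : Disjoint G T :=
    Finset.disjoint_of_subset_right (Finset.mem_powerset.1 hT) Finset.disjoint_sdiff
  rw [Finset.prod_union hGT, Finset.prod_neg, Finset.prod_const_one, mul_one]
  ring

end RandomSubsets

section SampledGraphs

open scoped BigOperators

/-- The weight of an unordered pair of vertices of a weighted graph. -/
def IsWeightedGraph.edgeWeight {V : Type*} {B : V → V → ℝ} (hB : IsWeightedGraph B) : Sym2 V → ℝ :=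
  Sym2.lift ⟨B, hB.symm⟩

lemma IsWeightedGraph.edgeWeight_mem_Icc {V : Type*} {B : V → V → ℝ} (hB : IsWeightedGraph B)
    (e : Sym2 V) : hB.edgeWeight e ∈ Icc (0 : ℝ) 1 :=
  e.ind hB.mem_Icc

/-- The adjacency matrix of a set of edges. -/
def adjWeight {κ : Type*} [DecidableEq κ] (G : Finset (Sym2 κ)) (i j : κ) : ℝ :=
  if s(i, j) ∈ G then 1 else 0

lemma isWeightedGraph_adjWeight {κ : Type*} [DecidableEq κ] (G : Finset (Sym2 κ)) :
    IsWeightedGraph (adjWeight G) :=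
  ⟨fun i j => by rw [adjWeight, adjWeight, Sym2.eq_swap],
    fun i j => by rw [adjWeight]; split_ifs <;> simp⟩

lemma CutNormLE.comp_snd {κ : Type*} [Fintype κ] {D : κ → κ → ℝ} {c : ℝ} (h : CutNormLE D c)
    (V : Type*) [Fintype V] [Nonempty V] : CutNormLE (fun u v : V × κ => D u.2 v.2) c :=
  (h.comp_fst V).comp_equiv (Equiv.prodComm V κ)

variable {κ V : Type*} [Fintype κ] [DecidableEq κ] [Fintype V] {B : V → V → ℝ}

/-- The possible edges of a simple graph on `κ`. -/
abbrev edgeSlots (κ : Type*) [Fintype κ] [DecidableEq κ] : Finset (Sym2 κ) :=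
  (⊤ : SimpleGraph κ).edgeFinset

/-- The homomorphism density in `B` of the graph on `κ` with edge set `E`. -/
noncomputable def IsWeightedGraph.edgeDensity (hB : IsWeightedGraph B) (E : Finset (Sym2 κ)) : ℝ :=
  𝔼 x : κ → V, ∏ e ∈ E, hB.edgeWeight (e.map x)

/-- The expectation of `f x G`, where the points `x i` are sampled from `V` independently and
uniformly, and then each edge `s(i, j)` is put into `G` independently with probability
`B (x i) (x j)`. -/
noncomputable def IsWeightedGraph.sampleExpect (hB : IsWeightedGraph B)
    (f : (κ → V) → Finset (Sym2 κ) → ℝ) : ℝ :=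
  𝔼 x, ∑ G ∈ (edgeSlots κ).powerset,
    bernoulliWeight (edgeSlots κ) (fun e => hB.edgeWeight (e.map x)) G * f x G

namespace IsWeightedGraph

variable (hB : IsWeightedGraph B) {f g : (κ → V) → Finset (Sym2 κ) → ℝ}

lemma sampleExpect_mono (h : ∀ x G, f x G ≤ g x G) : hB.sampleExpect f ≤ hB.sampleExpect g :=
  Finset.expect_le_expect fun x _ => Finset.sum_le_sum fun G _ =>
    mul_le_mul_of_nonneg_left (h x G)
      (bernoulliWeight_nonneg (fun _ => hB.edgeWeight_mem_Icc _) _ _)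

lemma sampleExpect_add (f g : (κ → V) → Finset (Sym2 κ) → ℝ) :
    hB.sampleExpect (fun x G => f x G + g x G) = hB.sampleExpect f + hB.sampleExpect g := by
  simp only [sampleExpect, mul_add, Finset.sum_add_distrib, Finset.expect_add_distrib]

lemma sampleExpect_mul_const (f : (κ → V) → Finset (Sym2 κ) → ℝ) (a : ℝ) :
    hB.sampleExpect (fun x G => f x G * a) = hB.sampleExpect f * a := by
  simp only [sampleExpect, ← mul_assoc, Finset.sum_mul, Finset.expect_mul]

lemma sampleExpect_expect {ι : Type*} [Fintype ι] (f : ι → (κ → V) → Finset (Sym2 κ) → ℝ) :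
    hB.sampleExpect (fun x G => 𝔼 i, f i x G) = 𝔼 i, hB.sampleExpect (f i) := by
  simp only [sampleExpect, Finset.mul_expect]
  rw [Finset.expect_comm]
  simp only [Finset.expect_sum_comm]

lemma sampleExpect_fst (g : (κ → V) → ℝ) : hB.sampleExpect (fun x _ => g x) = 𝔼 x, g x := by
  simp only [sampleExpect, ← Finset.sum_mul, sum_bernoulliWeight, one_mul]

lemma sampleExpect_snd (f : Finset (Sym2 κ) → ℝ) :
    hB.sampleExpect (fun _ G => f G) = ∑ G ∈ (edgeSlots κ).powerset,
      (∑ T ∈ (edgeSlots κ \ G).powerset, (-1) ^ T.card * hB.edgeDensity (G ∪ T)) * f G := by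
  simp only [sampleExpect, bernoulliWeight_eq_sum, Finset.expect_sum_comm, ← Finset.expect_mul,
    edgeDensity, Finset.mul_expect]

end IsWeightedGraph

lemma sum_bernoulliWeight_mul_four {i i' j j' : κ} (hi : i ≠ i') (hj : j ≠ j') (hij : i ≠ j)
    (hij' : i ≠ j') (hi'j : i' ≠ j) (hi'j' : i' ≠ j') (w a : Sym2 κ → ℝ) :
    ∑ G ∈ (edgeSlots κ).powerset, bernoulliWeight (edgeSlots κ) w G *
      ((adjWeight G i j - a s(i, j)) * (adjWeight G i j' - a s(i, j')) *
        (adjWeight G i' j - a s(i', j)) * (adjWeight G i' j' - a s(i', j')))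
      = (w s(i, j) - a s(i, j)) * (w s(i, j') - a s(i, j')) *
        (w s(i', j) - a s(i', j)) * (w s(i', j') - a s(i', j')) := by
  have hprod (d : Sym2 κ → ℝ) : ∏ e ∈ {s(i, j), s(i, j'), s(i', j), s(i', j')}, d e
      = d s(i, j) * d s(i, j') * d s(i', j) * d s(i', j') := by
    rw [Finset.prod_insert, Finset.prod_insert, Finset.prod_pair]
    · ring
    all_goals simp [hi, hj, hj.symm, hij, hij', hi'j', hij.symm]
  have hslots : {s(i, j), s(i, j'), s(i', j), s(i', j')} ⊆ edgeSlots κ := by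
    intro e he
    simp only [Finset.mem_insert, Finset.mem_singleton] at he
    rcases he with rfl | rfl | rfl | rfl <;> simpa
  simpa only [hprod, adjWeight] using sum_bernoulliWeight_mul_prod_sub hslots w a

lemma sampleExpect_four [Nonempty V] (hB : IsWeightedGraph B) {A : V → V → ℝ}
    (hA : IsWeightedGraph A) {i i' j j' : κ} (hi : i ≠ i') (hj : j ≠ j') (hij : i ≠ j)
    (hij' : i ≠ j') (hi'j : i' ≠ j) (hi'j' : i' ≠ j') :
    hB.sampleExpect (fun x G => (adjWeight G i j - A (x i) (x j)) *
        (adjWeight G i j' - A (x i) (x j')) * (adjWeight G i' j - A (x i') (x j)) *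
        (adjWeight G i' j' - A (x i') (x j')))
      = fourCycleDensity fun u v => B u v - A u v := by
  rw [fourCycleDensity_eq, ← expect_apply_four (fun v v' u u' => (B u v - A u v) *
    (B u v' - A u v') * (B u' v - A u' v) * (B u' v' - A u' v')) hj hij.symm hi'j.symm hij'.symm
    hi'j'.symm hi]
  exact Finset.expect_congr rfl fun x _ => sum_bernoulliWeight_mul_four hi hj hij hij' hi'j hi'j'
    (fun e => hB.edgeWeight (e.map x)) fun e => hA.edgeWeight (e.map x)

lemma expect_expect_ite_eq [Nonempty κ] :
    𝔼 i : κ, 𝔼 j : κ, (if i = j then 1 else 0 : ℝ) = 1 / Fintype.card κ := by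
  simp [Finset.expect]

-- Quadruples with a repetition contribute at most one each.
lemma IsWeightedGraph.sampleExpect_fourCycleDensity_le [Nonempty κ] [Nonempty V]
    (hB : IsWeightedGraph B) {A : V → V → ℝ} (hA : IsWeightedGraph A) :
    hB.sampleExpect (fun x (G : Finset (Sym2 κ)) =>
        fourCycleDensity fun i j => adjWeight G i j - A (x i) (x j))
      ≤ fourCycleDensity (fun u v => B u v - A u v) + 6 / Fintype.card κ := by
  have hterm (j j' i i' : κ) : hB.sampleExpect (fun x G => (adjWeight G i j - A (x i) (x j)) *
        (adjWeight G i j' - A (x i) (x j')) * (adjWeight G i' j - A (x i') (x j)) *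
        (adjWeight G i' j' - A (x i') (x j')))
      ≤ fourCycleDensity (fun u v => B u v - A u v) + ((if j = j' then 1 else 0) +
        (if j = i then 1 else 0) + (if j = i' then 1 else 0) + (if j' = i then 1 else 0) +
        (if j' = i' then 1 else 0) + (if i = i' then 1 else 0)) := by
    have hC := fourCycleDensity_nonneg fun u v => B u v - A u v
    by_cases hdist : i ≠ i' ∧ j ≠ j' ∧ i ≠ j ∧ i ≠ j' ∧ i' ≠ j ∧ i' ≠ j'
    · obtain ⟨hi, hj, hij, hij', hi'j, hi'j'⟩ := hdist
      rw [sampleExpect_four hB hA hi hj hij hij' hi'j hi'j']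
      exact le_add_of_nonneg_right (by positivity)
    · refine le_trans ((hB.sampleExpect_mono (g := fun _ _ => 1) fun x G => ?_).trans_eq
        (by rw [hB.sampleExpect_fst, Fintype.expect_const])) (b := 1) ?_
      · have hone := fun i j => hA.abs_sub_le_one (x i) (x j)
          ((isWeightedGraph_adjWeight G).mem_Icc i j)
        refine (le_abs_self _).trans ?_
        rw [abs_mul, abs_mul, abs_mul]
        exact mul_le_one₀ (mul_le_one₀ (mul_le_one₀ (hone i j) (abs_nonneg _) (hone i j'))
          (abs_nonneg _) (hone i' j)) (abs_nonneg _) (hone i' j')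
      · grind
  simp only [fourCycleDensity_eq (fun i j => adjWeight _ i j - _), hB.sampleExpect_expect]
  calc _ ≤ 𝔼 j : κ, 𝔼 j' : κ, 𝔼 i : κ, 𝔼 i' : κ, _ :=
        Finset.expect_le_expect fun j _ => Finset.expect_le_expect fun j' _ =>
          Finset.expect_le_expect fun i _ => Finset.expect_le_expect fun i' _ => hterm j j' i i'
    _ = _ := by
        simp only [Finset.expect_add_distrib, Fintype.expect_const, expect_expect_ite_eq]
        ring

lemma expect_sq_expect_apply_le [Nonempty κ] [Nonempty V] {h : V → ℝ} (h0 : 𝔼 v, h v = 0)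
    (h1 : ∀ v, |h v| ≤ 1) : 𝔼 x : κ → V, (𝔼 i, h (x i)) ^ 2 ≤ 1 / Fintype.card κ := by
  have hterm (i j : κ) : 𝔼 x : κ → V, h (x i) * h (x j) ≤ if i = j then 1 else 0 := by
    split_ifs with hij
    · refine Finset.expect_le Finset.univ_nonempty fun x _ => (le_abs_self _).trans ?_
      rw [abs_mul]
      exact mul_le_one₀ (h1 _) (abs_nonneg _) (h1 _)
    · rw [expect_apply_two hij fun a b => h a * h b, ← Finset.expect_mul_expect, h0, zero_mul]
  simp only [sq, Finset.expect_mul_expect]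
  rw [Finset.expect_comm]
  simp only [Finset.expect_comm (s := (Finset.univ : Finset (κ → V)))]
  rw [← expect_expect_ite_eq]
  exact Finset.expect_le_expect fun i _ => Finset.expect_le_expect fun j _ => hterm i j

/-- `RepresentsBlowUp B δ G` says that the graph `G`, with each vertex replaced by a copy of `V`,
can be overlaid on the weighted graph `B`, with each vertex replaced by a copy of `κ`, so that their
difference has cut norm at most `δ`. -/
def RepresentsBlowUp (B : V → V → ℝ) (δ : ℝ) (G : Finset (Sym2 κ)) : Prop :=
  ∃ σ : Equiv.Perm (V × κ), CutNormLE (fun u v => B u.1 v.1 - adjWeight G (σ u).2 (σ v).2) δ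

lemma RepresentsBlowUp.mono {δ δ' : ℝ} {G : Finset (Sym2 κ)} (h : RepresentsBlowUp B δ G)
    (hδ : δ ≤ δ') : RepresentsBlowUp B δ' G :=
  h.imp fun _ hσ => hσ.mono hδ

-- The step kernel `A` compares the blow-ups of `B` and of `G`, once equal classes are matched up.
lemma RepresentsBlowUp.of_partition [Nonempty κ] [Nonempty V] {ι : Type*} [Fintype ι]
    [DecidableEq ι] {A : ι → ι → ℝ} (hA : IsWeightedGraph A) {p : V → ι} {q : κ → ι}
    {G : Finset (Sym2 κ)} {ε₁ ε₂ d : ℝ} (hB : CutNormLE (fun u v => B u v - A (p u) (p v)) ε₁)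
    (hG : CutNormLE (fun i j => adjWeight G i j - A (q i) (q j)) ε₂)
    (hd : ∑ a, |𝔼 v, (if p v = a then 1 else 0 : ℝ) - 𝔼 i, (if q i = a then 1 else 0 : ℝ)| ≤ d) :
    RepresentsBlowUp B (ε₁ + 2 * d + ε₂) G := by
  classical
  obtain ⟨σ, hσ⟩ := exists_perm_expect_ne_le (fun u : V × κ => p u.1) fun u => q u.2
  have hmatch : 𝔼 u : V × κ, (if p u.1 ≠ q (σ u).2 then 1 else 0 : ℝ) ≤ d := by
    refine (hσ.trans_eq <| Finset.sum_congr rfl fun a _ => ?_).trans hd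
    rw [← Finset.univ_product_univ,
      Finset.expect_product' _ _ fun v _ => if p v = a then (1 : ℝ) else 0,
      Finset.expect_product' _ _ fun _ i => if q i = a then (1 : ℝ) else 0]
    simp only [Fintype.expect_const]
  refine ⟨σ, ?_⟩
  convert ((hB.comp_fst κ).add ((hA.cutNormLE_relabel (fun u : V × κ => p u.1)
    fun u => q (σ u).2).mono (mul_le_mul_of_nonneg_left hmatch zero_le_two))).add
      ((hG.comp_snd V).comp_equiv σ).neg using 3 with u v
  ring

lemma expect_sq_sum_abs_frequency_sub_le [Nonempty κ] [Nonempty V] {ι : Type*} [Fintype ι]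
    [DecidableEq ι] (p : V → ι) :
    𝔼 x : κ → V, (∑ a, |𝔼 v, (if p v = a then 1 else 0 : ℝ)
        - 𝔼 i, (if p (x i) = a then 1 else 0 : ℝ)|) ^ 2
      ≤ Fintype.card ι ^ 2 / Fintype.card κ := by
  have hfreq (a : ι) : 𝔼 x : κ → V, |𝔼 v, (if p v = a then 1 else 0 : ℝ)
      - 𝔼 i, (if p (x i) = a then 1 else 0 : ℝ)| ^ 2 ≤ 1 / Fintype.card κ := by
    have hmem (v : V) : (if p v = a then 1 else 0 : ℝ) ∈ Icc (0 : ℝ) 1 := by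
      split_ifs <;> simp
    simp only [sq_abs]
    convert expect_sq_expect_apply_le (κ := κ)
      (h := fun v => 𝔼 v, (if p v = a then 1 else 0 : ℝ) - (if p v = a then 1 else 0 : ℝ))
      (by simp only [Finset.expect_sub_distrib, Fintype.expect_const, sub_self])
      (fun v => ?_) using 3
    · simp only [Finset.expect_sub_distrib, Fintype.expect_const]
    · exact abs_sub_le_of_nonneg_of_le (Finset.expect_nonneg fun v _ => (hmem v).1)
        (Finset.expect_le Finset.univ_nonempty fun v _ => (hmem v).2) (hmem v).1 (hmem v).2
  calc _ ≤ 𝔼 x : κ → V, Fintype.card ι * ∑ a, |𝔼 v, (if p v = a then 1 else 0 : ℝ)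
          - 𝔼 i, (if p (x i) = a then 1 else 0 : ℝ)| ^ 2 :=
        Finset.expect_le_expect fun x _ => sq_sum_le_card_mul_sum_sq
    _ ≤ Fintype.card ι * ∑ _a : ι, 1 / (Fintype.card κ : ℝ) := by
        rw [← Finset.mul_expect, Finset.expect_sum_comm]
        exact mul_le_mul_of_nonneg_left (Finset.sum_le_sum fun a _ => hfreq a) (Nat.cast_nonneg _)
    _ = _ := by
        rw [Finset.sum_const, Finset.card_univ, nsmul_eq_mul]
        ring

-- Markov's inequality for the two statistics that have to be small in `of_partition`.
lemma IsWeightedGraph.sampleExpect_not_representsBlowUp_le [Nonempty κ] [Nonempty V]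
    (hB : IsWeightedGraph B) {ι : Type*} [Fintype ι] {A : ι → ι → ℝ} (hA : IsWeightedGraph A)
    {p : V → ι} {ε d : ℝ} (hp : CutNormLE (fun u v => B u v - A (p u) (p v)) ε) (hd : 0 < d) :
    hB.sampleExpect (fun _ (G : Finset (Sym2 κ)) =>
        {G | ¬ RepresentsBlowUp B (ε + 2 * d + d) G}.indicator 1 G)
      ≤ (4 * ε + 6 / Fintype.card κ) * (d ^ 4)⁻¹
        + Fintype.card ι ^ 2 / Fintype.card κ * (d ^ 2)⁻¹ := by
  classical
  set cyc : (κ → V) → Finset (Sym2 κ) → ℝ := fun x G =>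
    fourCycleDensity fun i j => adjWeight G i j - A (p (x i)) (p (x j))
  set dev : (κ → V) → ℝ := fun x => ∑ a, |𝔼 v, (if p v = a then 1 else 0 : ℝ)
        - 𝔼 i, (if p (x i) = a then 1 else 0 : ℝ)|
  have hmarkov (x G) : {G | ¬ RepresentsBlowUp B (ε + 2 * d + d) G}.indicator 1 G
      ≤ cyc x G * (d ^ 4)⁻¹ + dev x ^ 2 * (d ^ 2)⁻¹ := by
    have hcyc_nonneg : 0 ≤ cyc x G := fourCycleDensity_nonneg _
    rw [indicator_apply]
    split_ifs with hG
    swap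
    · positivity
    have hlarge : d ^ 4 < cyc x G ∨ d < dev x := by
      by_contra! h
      exact hG (.of_partition hA hp (.of_fourCycleDensity_le hd.le h.1) h.2)
    obtain h | h := hlarge
    · have : 1 ≤ cyc x G * (d ^ 4)⁻¹ :=
        (le_mul_inv_iff₀ (by positivity)).2 ((one_mul _).trans_le h.le)
      exact this.trans (le_add_of_nonneg_right (by positivity))
    · have : 1 ≤ dev x ^ 2 * (d ^ 2)⁻¹ :=
        (le_mul_inv_iff₀ (by positivity)).2
          ((one_mul _).trans_le (pow_le_pow_left₀ hd.le h.le 2))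
      exact this.trans (le_add_of_nonneg_left (mul_nonneg hcyc_nonneg (by positivity)))
  have hcycle : hB.sampleExpect cyc ≤ 4 * ε + 6 / Fintype.card κ :=
    (hB.sampleExpect_fourCycleDensity_le (hA.comp p)).trans <| add_le_add_left
      (hp.fourCycleDensity_le fun u v => (hA.comp p).abs_sub_le_one u v (hB.mem_Icc u v)) _
  refine (hB.sampleExpect_mono hmarkov).trans ?_
  rw [hB.sampleExpect_add, hB.sampleExpect_mul_const, hB.sampleExpect_mul_const,
    hB.sampleExpect_fst]
  gcongr
  exact expect_sq_sum_abs_frequency_sub_le p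

lemma exists_sampleExpect_not_representsBlowUp_le {δ : ℝ} (hδ : 0 < δ) :
    ∃ k : ℕ, 0 < k ∧ ∀ {V : Type*} [Fintype V] [Nonempty V] {B : V → V → ℝ}
      (hB : IsWeightedGraph B), hB.sampleExpect (fun _ (G : Finset (Sym2 (Fin k))) =>
        {G | ¬ RepresentsBlowUp B δ G}.indicator 1 G) ≤ 1 / 4 := by
  set d := δ / 4 with hd_def
  have hd : 0 < d := by positivity
  set ε := min d (d ^ 4 / 64)
  have hε : 0 < ε := by positivity
  obtain ⟨J, hJ⟩ := exists_nat_gt (1 / ε ^ 2)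
  rw [div_lt_iff₀ (by positivity)] at hJ
  obtain ⟨k, hk⟩ := exists_nat_gt (max 0 (96 / d ^ 4 + 8 * (4 ^ J) ^ 2 / d ^ 2))
  obtain ⟨hk0, hkd⟩ := max_lt_iff.1 hk
  have : NeZero k := ⟨by exact_mod_cast hk0.ne'⟩
  refine ⟨k, Nat.pos_of_neZero k, fun {V} _ _ B hB => ?_⟩
  obtain ⟨ι, _, p, A, hcard, hA, hp⟩ := frieze_kannan_weak_regularity hB hε.le hJ
  have hM : (Fintype.card ι : ℝ) ≤ 4 ^ J := by exact_mod_cast hcard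
  have hcyc : (4 * ε + 6 / k) * (d ^ 4)⁻¹ ≤ 1 / 8 := by
    have h6 : 6 / k ≤ d ^ 4 / 16 := by
      have : 96 / d ^ 4 ≤ k := (le_add_of_nonneg_right (by positivity)).trans hkd.le
      rw [div_le_iff₀ (by positivity)] at this
      rw [div_le_iff₀ hk0]
      linarith
    rw [mul_inv_le_iff₀ (by positivity)]
    linarith [min_le_right d (d ^ 4 / 64)]
  have hdev : (Fintype.card ι : ℝ) ^ 2 / k * (d ^ 2)⁻¹ ≤ 1 / 8 := by
    have h8 : 8 * (4 ^ J) ^ 2 / d ^ 2 ≤ k := (le_add_of_nonneg_left (by positivity)).trans hkd.le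
    rw [div_le_iff₀ (by positivity)] at h8
    have hsq : (Fintype.card ι : ℝ) ^ 2 ≤ (4 ^ J) ^ 2 := by gcongr
    rw [mul_inv_le_iff₀ (by positivity), div_le_iff₀ hk0]
    linarith
  have hsum : ε + 2 * d + d ≤ δ := by linarith [min_le_left d (d ^ 4 / 64)]
  have hbad := hB.sampleExpect_not_representsBlowUp_le (κ := Fin k) hA hp hd
  rw [Fintype.card_fin] at hbad
  refine ((hB.sampleExpect_mono fun _ G => ?_).trans hbad).trans (by linarith)
  refine indicator_le_indicator_of_subset (f := 1) ?_ (fun _ => zero_le_one) G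
  exact fun G hG h => hG (h.mono hsum)

lemma RepresentsBlowUp.exists_perm_cutNormLE {B₁ B₂ : V → V → ℝ} {δ₁ δ₂ : ℝ} {G : Finset (Sym2 κ)}
    (h₁ : RepresentsBlowUp B₁ δ₁ G) (h₂ : RepresentsBlowUp B₂ δ₂ G) :
    ∃ σ : Equiv.Perm (V × κ), CutNormLE (fun u v => B₁ u.1 v.1 - B₂ (σ u).1 (σ v).1) (δ₁ + δ₂) := by
  obtain ⟨σ₁, hσ₁⟩ := h₁
  obtain ⟨σ₂, hσ₂⟩ := h₂
  refine ⟨σ₁.trans σ₂.symm, ?_⟩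
  convert hσ₁.add (hσ₂.comp_equiv (σ₁.trans σ₂.symm)).neg using 3 with u v
  simp

-- The law of the sampled graph is a fixed linear function of the edge densities.
lemma abs_sampleExpect_sub_le {B₁ B₂ : V → V → ℝ} (hB₁ : IsWeightedGraph B₁)
    (hB₂ : IsWeightedGraph B₂) {f : Finset (Sym2 κ) → ℝ} (hf : ∀ G, |f G| ≤ 1) {η : ℝ}
    (h : ∀ E ⊆ edgeSlots κ, |hB₁.edgeDensity E - hB₂.edgeDensity E| ≤ η) :
    |hB₁.sampleExpect (fun _ G => f G) - hB₂.sampleExpect (fun _ G => f G)|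
      ≤ 4 ^ (edgeSlots κ).card * η := by
  have hη : 0 ≤ η := (abs_nonneg _).trans (h ∅ (Finset.empty_subset _))
  have hlaw : ∀ G ∈ (edgeSlots κ).powerset, |∑ T ∈ (edgeSlots κ \ G).powerset, (-1) ^ T.card *
      (hB₁.edgeDensity (G ∪ T) - hB₂.edgeDensity (G ∪ T))| ≤ 2 ^ (edgeSlots κ).card * η := by
    intro G hG
    calc _ ≤ ∑ _T ∈ (edgeSlots κ \ G).powerset, η := by
          refine (Finset.abs_sum_le_sum_abs _ _).trans (Finset.sum_le_sum fun T hT => ?_)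
          rw [abs_mul, abs_neg_one_pow, one_mul]
          exact h _ (Finset.union_subset (Finset.mem_powerset.1 hG)
            ((Finset.mem_powerset.1 hT).trans Finset.sdiff_subset))
      _ ≤ _ := by
          rw [Finset.sum_const, Finset.card_powerset, nsmul_eq_mul, Nat.cast_pow, Nat.cast_ofNat]
          gcongr
          exacts [one_le_two, Finset.sdiff_subset]
  rw [hB₁.sampleExpect_snd, hB₂.sampleExpect_snd, ← Finset.sum_sub_distrib]
  simp only [← sub_mul, ← Finset.sum_sub_distrib, ← mul_sub]
  calc _ ≤ ∑ _G ∈ (edgeSlots κ).powerset, 2 ^ (edgeSlots κ).card * η := by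
        refine (Finset.abs_sum_le_sum_abs _ _).trans (Finset.sum_le_sum fun G hG => ?_)
        rw [abs_mul]
        exact (mul_le_of_le_one_right (abs_nonneg _) (hf G)).trans (hlaw G hG)
    _ = _ := by
        rw [Finset.sum_const, Finset.card_powerset, nsmul_eq_mul, Nat.cast_pow, Nat.cast_ofNat,
          ← mul_assoc, ← mul_pow]
        norm_num

theorem exists_forall_edgeDensity_imp_cutNormLE {ε : ℝ} (hε : 0 < ε) :
    ∃ k : ℕ, 0 < k ∧ ∃ η : ℝ, 0 < η ∧ ∀ {V : Type*} [Fintype V] [Nonempty V] {B₁ B₂ : V → V → ℝ}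
      (hB₁ : IsWeightedGraph B₁) (hB₂ : IsWeightedGraph B₂),
      (∀ E ⊆ edgeSlots (Fin k), |hB₁.edgeDensity E - hB₂.edgeDensity E| ≤ η) →
      ∃ σ : Equiv.Perm (V × Fin k),
        CutNormLE (fun u v => B₁ u.1 v.1 - B₂ (σ u).1 (σ v).1) ε := by
  obtain ⟨k, hk, hbad⟩ := exists_sampleExpect_not_representsBlowUp_le (half_pos hε)
  refine ⟨k, hk, (4 ^ (edgeSlots (Fin k)).card)⁻¹ * (1 / 4), by positivity,
    fun {V} _ _ B₁ B₂ hB₁ hB₂ h => ?_⟩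
  by_contra! hno
  set bad : (V → V → ℝ) → Finset (Sym2 (Fin k)) → ℝ :=
    fun B => {G | ¬ RepresentsBlowUp B (ε / 2) G}.indicator 1
  have hone (G) : 1 ≤ bad B₁ G + bad B₂ G := by
    have hor : ¬ RepresentsBlowUp B₁ (ε / 2) G ∨ ¬ RepresentsBlowUp B₂ (ε / 2) G := by
      by_contra! hG
      obtain ⟨σ, hσ⟩ := hG.1.exists_perm_cutNormLE hG.2
      exact hno σ (by rwa [add_halves] at hσ)
    have hnonneg (B) : 0 ≤ bad B G := indicator_nonneg (fun _ _ => zero_le_one) G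
    have heq_one {B} (hG : ¬ RepresentsBlowUp B (ε / 2) G) : bad B G = 1 := by simp [bad, hG]
    obtain hG | hG := hor
    · exact le_add_of_le_of_nonneg (heq_one hG).ge (hnonneg _)
    · exact le_add_of_nonneg_of_le (hnonneg _) (heq_one hG).ge
  have hclose := abs_sampleExpect_sub_le hB₁ hB₂ (f := bad B₂) (fun G => by
    classical simp only [bad, indicator_apply]; split_ifs <;> simp) h
  rw [mul_inv_cancel_left₀ (by positivity)] at hclose
  have htotal : 1 ≤ hB₁.sampleExpect (fun _ G => bad B₁ G)
      + hB₁.sampleExpect (fun _ G => bad B₂ G) := by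
    rw [← hB₁.sampleExpect_add]
    refine Eq.trans_le ?_ (hB₁.sampleExpect_mono (f := fun _ _ => 1) fun _ G => hone G)
    rw [hB₁.sampleExpect_fst, Fintype.expect_const]
  linarith [hbad hB₁, hbad hB₂, (abs_le.1 hclose).2]

end SampledGraphs

section CutBounds

variable {Ω : Type*} [MeasurableSpace Ω]

/-- `CutBound μ D c` says that the cut norm of the kernel `D` on the measure space `(Ω, μ)` is at
most `c`. -/
def CutBound (μ : Measure Ω) (D : Ω → Ω → ℝ) (c : ℝ) : Prop :=
  ∀ S T, MeasurableSet S → MeasurableSet T → |∫ p in S ×ˢ T, D p.1 p.2 ∂(μ.prod μ)| ≤ c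

-- Layer-cake: `∫ g * s` averages the integrals of `g` over the superlevel sets of `s`.
lemma abs_integral_mul_le_of_superlevel {μ : Measure Ω} [SFinite μ] {g s : Ω → ℝ} {c : ℝ}
    (hg : Integrable g μ) (hs : Measurable s) (hs01 : ∀ x, s x ∈ Icc (0 : ℝ) 1)
    (h : ∀ l : ℝ, |∫ x in {x | l ≤ s x}, g x ∂μ| ≤ c) : |∫ x, g x * s x ∂μ| ≤ c := by
  set I : Measure ℝ := volume.restrict (Ioc 0 1)
  set A : Set (Ω × ℝ) := {p | p.2 ≤ s p.1}
  have hA : MeasurableSet A := measurableSet_le measurable_snd (hs.comp measurable_fst)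
  have hcake : ∀ x, ∫ l, A.indicator (fun p => g p.1) (x, l) ∂I = g x * s x := fun x => by
    have hset : Iic (s x) ∩ Ioc 0 1 = Ioc 0 (s x) := by
      ext l
      simp only [mem_inter_iff, mem_Iic, mem_Ioc]
      exact ⟨fun hl => ⟨hl.2.1, hl.1⟩, fun hl => ⟨hl.2, hl.1, hl.2.trans (hs01 x).2⟩⟩
    change ∫ l, (Iic (s x)).indicator (fun _ => g x) l ∂I = _
    rw [integral_indicator measurableSet_Iic, Measure.restrict_restrict measurableSet_Iic, hset,
      setIntegral_const, Real.volume_real_Ioc_of_le (hs01 x).1, sub_zero, smul_eq_mul, mul_comm]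
  have hint : Integrable (A.indicator fun p => g p.1) (μ.prod I) := (hg.comp_fst I).indicator hA
  have hlevel : ∀ l, ∫ x, A.indicator (fun p => g p.1) (x, l) ∂μ = ∫ x in {x | l ≤ s x}, g x ∂μ :=
    fun l => integral_indicator (measurableSet_le measurable_const hs)
  calc |∫ x, g x * s x ∂μ|
      = |∫ l, ∫ x in {x | l ≤ s x}, g x ∂μ ∂I| := by
        simp_rw [← hcake, ← hlevel]
        exact congrArg _ (integral_integral_swap hint)
    _ ≤ c * I.real univ := (Real.norm_eq_abs _).symm.trans_le <|
        norm_integral_le_of_norm_le_const (Eventually.of_forall h)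
    _ = c := by simp [I]

variable {μ : Measure Ω} {D D' : Ω → Ω → ℝ} {c c' : ℝ}

lemma CutBound.add (hD : Integrable (fun p => D p.1 p.2) (μ.prod μ))
    (hD' : Integrable (fun p => D' p.1 p.2) (μ.prod μ)) (h : CutBound μ D c)
    (h' : CutBound μ D' c') : CutBound μ (fun x y => D x y + D' x y) (c + c') :=
  fun S T hS hT => by
    rw [integral_add hD.integrableOn hD'.integrableOn]
    exact (abs_add_le _ _).trans (add_le_add (h S T hS hT) (h' S T hS hT))

lemma CutBound.of_integral_abs (hD : Integrable (fun p => D p.1 p.2) (μ.prod μ))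
    (h : ∫ p, |D p.1 p.2| ∂(μ.prod μ) ≤ c) : CutBound μ D c := fun _ _ _ _ =>
  abs_integral_le_integral_abs.trans <|
    (setIntegral_le_integral hD.abs (Eventually.of_forall fun _ => abs_nonneg _)).trans h

lemma CutBound.abs_integral_mul_mul_le [SFinite μ] (h : CutBound μ D c)
    (hD : Integrable (fun p => D p.1 p.2) (μ.prod μ)) {s t : Ω → ℝ} (hs : Measurable s)
    (hs01 : ∀ x, s x ∈ Icc (0 : ℝ) 1) (ht : Measurable t) (ht01 : ∀ x, t x ∈ Icc (0 : ℝ) 1) :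
    |∫ p, D p.1 p.2 * s p.1 * t p.2 ∂(μ.prod μ)| ≤ c := by
  have hDs : Integrable (fun p => D p.1 p.2 * s p.1) (μ.prod μ) :=
    hD.mul_bdd (c := 1) (hs.comp measurable_fst).aestronglyMeasurable
      (Eventually.of_forall fun p => abs_le.2 ⟨by linarith [(hs01 p.1).1], (hs01 p.1).2⟩)
  refine abs_integral_mul_le_of_superlevel hDs (ht.comp measurable_snd) (fun p => ht01 p.2)
    fun l => abs_integral_mul_le_of_superlevel hD.integrableOn (hs.comp measurable_fst)
      (fun p => hs01 p.1) fun k => ?_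
  have hset : {p : Ω × Ω | k ≤ s p.1} ∩ {p | l ≤ t p.2} = {x | k ≤ s x} ×ˢ {y | l ≤ t y} := rfl
  have hk : MeasurableSet {p : Ω × Ω | k ≤ s p.1} :=
    measurableSet_le measurable_const (hs.comp measurable_fst)
  change |∫ p in {p : Ω × Ω | k ≤ s p.1}, D p.1 p.2 ∂((μ.prod μ).restrict {p | l ≤ t p.2})| ≤ c
  rw [Measure.restrict_restrict hk, hset]
  exact h _ _ (measurableSet_le measurable_const hs) (measurableSet_le measurable_const ht)

end CutBounds

section Counting

lemma integrable_of_mem_Icc {X : Type*} [MeasurableSpace X] {ν : Measure X} [IsFiniteMeasure ν]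
    {f : X → ℝ} (hf : Measurable f) (hf01 : ∀ x, f x ∈ Icc (0 : ℝ) 1) : Integrable f ν :=
  .of_bound hf.aestronglyMeasurable 1 <| Eventually.of_forall fun x =>
    abs_le.2 ⟨by linarith [(hf01 x).1], (hf01 x).2⟩

variable {Ω κ : Type*} [MeasurableSpace Ω]

/-- A bipartite (not necessarily symmetric) graphon on `Ω`. -/
structure IsKernel (U : Ω → Ω → ℝ) : Prop where
  measurable : Measurable (Function.uncurry U)
  mem_Icc : ∀ x y, U x y ∈ Icc (0 : ℝ) 1

variable {w w' : κ × κ → Ω → Ω → ℝ}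

lemma measurable_prod_kernel (hw : ∀ e, IsKernel (w e)) (E : Finset (κ × κ)) :
    Measurable fun x : κ → Ω => ∏ e ∈ E, w e (x e.1) (x e.2) :=
  Finset.measurable_fun_prod E fun e _ => (hw e).measurable.comp
    ((measurable_pi_apply e.1).prodMk (measurable_pi_apply e.2) :
      Measurable fun x : κ → Ω => (x e.1, x e.2))

lemma prod_kernel_mem_Icc (hw : ∀ e, IsKernel (w e)) (E : Finset (κ × κ)) (x : κ → Ω) :
    ∏ e ∈ E, w e (x e.1) (x e.2) ∈ Icc (0 : ℝ) 1 :=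
  ⟨Finset.prod_nonneg fun e _ => ((hw e).mem_Icc _ _).1,
    Finset.prod_le_one (fun e _ => ((hw e).mem_Icc _ _).1) fun e _ => ((hw e).mem_Icc _ _).2⟩

variable [Fintype κ] {μ : Measure Ω} [IsProbabilityMeasure μ]

lemma measurePreserving_update [DecidableEq κ] (k : κ) :
    MeasurePreserving (fun p : (κ → Ω) × Ω => Function.update p.1 k p.2)
      ((Measure.pi fun _ => μ).prod μ) (Measure.pi fun _ => μ) := by
  have hmeas : Measurable fun p : (κ → Ω) × Ω => Function.update p.1 k p.2 := by
    refine measurable_pi_lambda _ fun i => ?_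
    rcases eq_or_ne i k with rfl | hi
    · simpa using measurable_snd
    · simp only [Function.update_of_ne hi]
      exact (measurable_pi_apply i).comp measurable_fst
  refine ⟨hmeas, (Measure.pi_eq fun s hs => ?_).symm⟩
  have hbox : (fun p : (κ → Ω) × Ω => Function.update p.1 k p.2) ⁻¹' univ.pi s
      = univ.pi (Function.update s k univ) ×ˢ s k := by
    ext p
    simp only [mem_preimage, mem_univ_pi, mem_prod]
    refine ⟨fun h => ⟨fun i => ?_, by simpa using h k⟩, fun h i => ?_⟩ <;>
      rcases eq_or_ne i k with rfl | hi
    · simp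
    · simpa [hi] using h i
    · simpa using h.2
    · simpa [hi] using h.1 i
  rw [Measure.map_apply hmeas (MeasurableSet.univ_pi hs), hbox, Measure.prod_prod, Measure.pi_pi,
    ← Finset.mul_prod_erase _ _ (Finset.mem_univ k),
    ← Finset.mul_prod_erase Finset.univ (fun i => μ (s i)) (Finset.mem_univ k),
    Function.update_self, measure_univ, one_mul, mul_comm]
  exact congrArg _ <| Finset.prod_congr rfl fun i hi => by
    rw [Function.update_of_ne (Finset.ne_of_mem_erase hi)]

lemma measurePreserving_eval_pair {i j : κ} (hij : i ≠ j) :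
    MeasurePreserving (fun x : κ → Ω => (x i, x j)) (Measure.pi fun _ => μ) (μ.prod μ) := by
  refine ⟨(measurable_pi_apply i).prodMk (measurable_pi_apply j), ?_⟩
  have hindep := (ProbabilityTheory.iIndepFun_pi (μ := fun _ : κ => μ) (X := fun _ => id)
    fun _ => aemeasurable_id).indepFun hij
  have hmap := (ProbabilityTheory.indepFun_iff_map_prod_eq_prod_map_map
    (measurable_pi_apply i).aemeasurable (measurable_pi_apply j).aemeasurable).1 hindep
  have heval : ∀ k : κ, (Measure.pi fun _ => μ).map (fun x : κ → Ω => x k) = μ :=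
    fun k => (measurePreserving_eval (fun _ : κ => μ) k).map_eq
  simpa only [Function.eval, id, heval] using hmap

lemma integral_eq_integral_update_update [DecidableEq κ] (i j : κ) {f : (κ → Ω) → ℝ}
    (hf : Integrable f (Measure.pi fun _ => μ)) :
    ∫ x, f x ∂(Measure.pi fun _ => μ) = ∫ x, ∫ p : Ω × Ω,
      f (Function.update (Function.update x i p.1) j p.2) ∂(μ.prod μ) ∂(Measure.pi fun _ => μ) := by
  have hi := measurePreserving_update (μ := μ) i
  have hj := measurePreserving_update (μ := μ) j
  have hcomp := hj.comp ((hi.prod (MeasurePreserving.id μ)).comp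
    (measurePreserving_prodAssoc (Measure.pi fun _ => μ) μ μ).symm)
  rw [← hcomp.map_eq] at hf
  conv_lhs => rw [← hcomp.map_eq]
  rw [integral_map hcomp.aemeasurable hf.aestronglyMeasurable]
  exact integral_prod _
    ((integrable_map_measure hf.aestronglyMeasurable hcomp.aemeasurable).1 hf)

variable {D : Ω → Ω → ℝ} {c : ℝ}

-- With all coordinates but `x i`, `x j` frozen, the integral tests `D` against a product.
lemma CutBound.abs_integral_mul_mul_le_of_update_eq [DecidableEq κ] {i j : κ} (hij : i ≠ j)
    (h : CutBound μ D c) (hD : Integrable (fun p => D p.1 p.2) (μ.prod μ))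
    {f g : (κ → Ω) → ℝ} (hf : Measurable f) (hf01 : ∀ x, f x ∈ Icc (0 : ℝ) 1)
    (hfj : ∀ x v, f (Function.update x j v) = f x)
    (hg : Measurable g) (hg01 : ∀ x, g x ∈ Icc (0 : ℝ) 1)
    (hgi : ∀ x u, g (Function.update x i u) = g x) :
    |∫ x, D (x i) (x j) * f x * g x ∂(Measure.pi fun _ => μ)| ≤ c := by
  have hDij : Integrable (fun x : κ → Ω => D (x i) (x j)) (Measure.pi fun _ => μ) :=
    (measurePreserving_eval_pair hij).integrable_comp_of_integrable hD
  have hbdd : ∀ {f : (κ → Ω) → ℝ}, (∀ x, f x ∈ Icc (0 : ℝ) 1) →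
      ∀ᵐ x ∂(Measure.pi fun _ => μ), ‖f x‖ ≤ 1 := fun hf01 => Eventually.of_forall fun x =>
    abs_le.2 ⟨by linarith [(hf01 x).1], (hf01 x).2⟩
  rw [integral_eq_integral_update_update i j
    ((hDij.mul_bdd hf.aestronglyMeasurable (hbdd hf01)).mul_bdd hg.aestronglyMeasurable
      (hbdd hg01))]
  have hinner : ∀ x : κ → Ω, |∫ p : Ω × Ω, D p.1 p.2 * f (Function.update x i p.1) *
      g (Function.update x j p.2) ∂(μ.prod μ)| ≤ c := fun x =>
    h.abs_integral_mul_mul_le hD (hf.comp (measurable_update x)) (fun _ => hf01 _)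
      (hg.comp (measurable_update x)) fun _ => hg01 _
  have hupdate : ∀ (x : κ → Ω) u v,
      g (Function.update (Function.update x i u) j v) = g (Function.update x j v) := fun x u v => by
    rw [Function.update_comm hij, hgi]
  simp only [Function.update_self, Function.update_of_ne hij, hfj, hupdate]
  refine (Real.norm_eq_abs _).symm.trans_le <|
    (norm_integral_le_of_norm_le_const (Eventually.of_forall hinner)).trans_eq (by simp)

/-- The homomorphism density of the graph with edge set `E` whose edges carry their own kernels
`w e`; it is `t(F, W)` when all kernels are `W`. -/
noncomputable def decoratedDensity (μ : Measure Ω) (w : κ × κ → Ω → Ω → ℝ) (E : Finset (κ × κ)) :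
    ℝ :=
  ∫ x : κ → Ω, ∏ e ∈ E, w e (x e.1) (x e.2) ∂(Measure.pi fun _ => μ)

variable {a : κ × κ} {E : Finset (κ × κ)} [LinearOrder κ]

lemma CutBound.abs_integral_mul_prod_le (h : CutBound μ D c)
    (hD : Integrable (fun p => D p.1 p.2) (μ.prod μ)) (ha : a.1 < a.2) (hE : ∀ e ∈ E, e.1 < e.2)
    (haE : a ∉ E) (hw : ∀ e, IsKernel (w e)) :
    |∫ x : κ → Ω, D (x a.1) (x a.2) * ∏ e ∈ E, w e (x e.1) (x e.2) ∂(Measure.pi fun _ => μ)|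
      ≤ c := by
  have hupdate : ∀ (k : κ) (r : Finset (κ × κ)), (∀ e ∈ r, e.1 ≠ k ∧ e.2 ≠ k) →
      ∀ (x : κ → Ω) u, ∏ e ∈ r, w e (Function.update x k u e.1) (Function.update x k u e.2)
        = ∏ e ∈ r, w e (x e.1) (x e.2) := fun k r hk x u => Finset.prod_congr rfl fun e he => by
    rw [Function.update_of_ne (hk e he).1, Function.update_of_ne (hk e he).2]
  simp_rw [← Finset.prod_filter_mul_prod_filter_not E fun e => e.1 ≠ a.2 ∧ e.2 ≠ a.2,
    ← mul_assoc]
  refine h.abs_integral_mul_mul_le_of_update_eq ha.ne hD (measurable_prod_kernel hw _)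
    (prod_kernel_mem_Icc hw _) (hupdate _ _ fun e he => (Finset.mem_filter.1 he).2)
    (measurable_prod_kernel hw _) (prod_kernel_mem_Icc hw _) (hupdate _ _ fun e he => ?_)
  obtain ⟨heE, hmeets⟩ := Finset.mem_filter.1 he
  have hlt := hE e heE
  have hne : ¬ (e.1 = a.1 ∧ e.2 = a.2) := fun hea => haE (Prod.ext hea.1 hea.2 ▸ heE)
  grind

lemma CutBound.abs_decoratedDensity_update_sub_le {U : Ω → Ω → ℝ}
    (h : CutBound μ (fun x y => U x y - w a x y) c) (hU : IsKernel U) (hw : ∀ e, IsKernel (w e))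
    (hE : ∀ e ∈ E, e.1 < e.2) (haE : a ∈ E) :
    |decoratedDensity μ (Function.update w a U) E - decoratedDensity μ w E| ≤ c := by
  have hw' : ∀ e, IsKernel (Function.update w a U e) := by
    rw [Function.forall_update_iff w fun _ => IsKernel]
    exact ⟨hU, fun e _ => hw e⟩
  have hint : ∀ {w : κ × κ → Ω → Ω → ℝ}, (∀ e, IsKernel (w e)) → Integrable
      (fun x : κ → Ω => ∏ e ∈ E, w e (x e.1) (x e.2)) (Measure.pi fun _ => μ) := fun hw =>
    integrable_of_mem_Icc (measurable_prod_kernel hw E) (prod_kernel_mem_Icc hw E)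
  have hD : Integrable (fun p : Ω × Ω => U p.1 p.2 - w a p.1 p.2) (μ.prod μ) :=
    (integrable_of_mem_Icc hU.measurable fun _ => hU.mem_Icc _ _).sub
      (integrable_of_mem_Icc (hw a).measurable fun _ => (hw a).mem_Icc _ _)
  have hfactor : ∀ x : κ → Ω,
      ∏ e ∈ E, Function.update w a U e (x e.1) (x e.2) - ∏ e ∈ E, w e (x e.1) (x e.2) =
        (U (x a.1) (x a.2) - w a (x a.1) (x a.2)) *
          ∏ e ∈ E.erase a, w e (x e.1) (x e.2) := fun x => by
    rw [← Finset.mul_prod_erase E _ haE, ← Finset.mul_prod_erase E _ haE, sub_mul,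
      Function.update_self]
    congr 2
    exact Finset.prod_congr rfl fun e he => by
      rw [Function.update_of_ne (Finset.ne_of_mem_erase he)]
  rw [decoratedDensity, decoratedDensity, ← integral_sub (hint hw') (hint hw)]
  simp_rw [hfactor]
  exact h.abs_integral_mul_prod_le hD (hE a haE) (fun e he => hE e (Finset.mem_of_mem_erase he))
    (Finset.notMem_erase a E) hw

theorem abs_decoratedDensity_sub_le (h : ∀ e, CutBound μ (fun x y => w e x y - w' e x y) c)
    (hw : ∀ e, IsKernel (w e)) (hw' : ∀ e, IsKernel (w' e)) (hE : ∀ e ∈ E, e.1 < e.2) :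
    |decoratedDensity μ w E - decoratedDensity μ w' E| ≤ E.card * c := by
  have hybrid : ∀ s ⊆ E, |decoratedDensity μ (s.piecewise w w') E - decoratedDensity μ w' E|
      ≤ s.card * c := by
    intro s
    induction s using Finset.induction_on with
    | empty => simp
    | insert a s has ih =>
      intro hsE
      rw [Finset.insert_subset_iff] at hsE
      have hws : ∀ e, IsKernel (s.piecewise w w' e) := fun e =>
        s.piecewise_cases w w' IsKernel (hw e) (hw' e)
      have hstep := CutBound.abs_decoratedDensity_update_sub_le (U := w a)
        (by simpa only [Finset.piecewise_eq_of_notMem _ _ _ has] using h a) (hw a) hws hE hsE.1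
      rw [Finset.piecewise_insert, Finset.card_insert_of_notMem has, Nat.cast_succ, add_mul,
        one_mul, add_comm]
      exact (abs_sub_le _ _ _).trans (add_le_add hstep (ih hsE.2))
  have hall : decoratedDensity μ (E.piecewise w w') E = decoratedDensity μ w E :=
    congrArg (integral _) <| funext fun x => Finset.prod_congr rfl fun e he => by
      rw [Finset.piecewise_eq_of_mem _ _ _ he]
  exact hall ▸ hybrid E Subset.rfl

end Counting

section CutDistance

instance : IsProbabilityMeasure μ01 := ⟨by simp⟩

lemma IsGraphon.isKernel {W : ℝ → ℝ → ℝ} (hW : IsGraphon W) : IsKernel W := ⟨hW.1, hW.2.2⟩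

lemma IsGraphon.integrable {W : ℝ → ℝ → ℝ} (hW : IsGraphon W) :
    Integrable (fun p : ℝ × ℝ => W p.1 p.2) (μ01.prod μ01) :=
  integrable_of_mem_Icc hW.1 fun p => hW.2.2 p.1 p.2

lemma IsGraphon.comp {W : ℝ → ℝ → ℝ} (hW : IsGraphon W) {φ : ℝ → ℝ} (hφ : Measurable φ) :
    IsGraphon fun x y => W (φ x) (φ y) :=
  ⟨hW.1.comp ((hφ.comp measurable_fst).prodMk (hφ.comp measurable_snd)),
    fun _ _ => hW.2.1 _ _, fun _ _ => hW.2.2 _ _⟩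

variable {D : ℝ → ℝ → ℝ} {c : ℝ}

lemma setIntegral_setIntegral_eq_prod
    (hD : Integrable (fun p : ℝ × ℝ => D p.1 p.2) (μ01.prod μ01)) {S T : Set ℝ}
    (hS : MeasurableSet S) (hT : MeasurableSet T) (hS01 : S ⊆ Icc (0 : ℝ) 1)
    (hT01 : T ⊆ Icc (0 : ℝ) 1) :
    ∫ x in S, ∫ y in T, D x y = ∫ p in S ×ˢ T, D p.1 p.2 ∂(μ01.prod μ01) := by
  rw [setIntegral_prod _ hD.integrableOn, Measure.restrict_restrict hS, inter_eq_left.2 hS01,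
    Measure.restrict_restrict hT, inter_eq_left.2 hT01]

lemma cutNorm_nonneg (D : ℝ → ℝ → ℝ) : 0 ≤ cutNorm D :=
  Real.sSup_nonneg <| by
    rintro _ ⟨S, T, -, -, -, -, rfl⟩
    exact abs_nonneg _

lemma cutNorm_le_iff_cutBound (hD : Integrable (fun p : ℝ × ℝ => D p.1 p.2) (μ01.prod μ01)) :
    cutNorm D ≤ c ↔ CutBound μ01 D c := by
  have hnonempty : { r : ℝ | ∃ S T : Set ℝ, MeasurableSet S ∧ MeasurableSet T ∧
      S ⊆ Icc (0 : ℝ) 1 ∧ T ⊆ Icc (0 : ℝ) 1 ∧ r = |∫ x in S, ∫ y in T, D x y| }.Nonempty :=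
    ⟨_, ∅, ∅, .empty, .empty, empty_subset _, empty_subset _, rfl⟩
  have hbdd : BddAbove { r : ℝ | ∃ S T : Set ℝ, MeasurableSet S ∧ MeasurableSet T ∧
      S ⊆ Icc (0 : ℝ) 1 ∧ T ⊆ Icc (0 : ℝ) 1 ∧ r = |∫ x in S, ∫ y in T, D x y| } := by
    refine ⟨∫ p, |D p.1 p.2| ∂(μ01.prod μ01), ?_⟩
    rintro _ ⟨S, T, hS, hT, hS01, hT01, rfl⟩
    rw [setIntegral_setIntegral_eq_prod hD hS hT hS01 hT01]
    exact CutBound.of_integral_abs hD le_rfl S T hS hT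
  rw [cutNorm, csSup_le_iff hbdd hnonempty]
  refine ⟨fun h S T hS hT => ?_, ?_⟩
  · have hS' := hS.inter (measurableSet_Icc (a := (0 : ℝ)) (b := 1))
    have hT' := hT.inter (measurableSet_Icc (a := (0 : ℝ)) (b := 1))
    have hrestrict : ∀ R, MeasurableSet R → μ01.restrict (R ∩ Icc (0 : ℝ) 1) = μ01.restrict R :=
      fun R hR => by
        rw [Measure.restrict_restrict (hR.inter measurableSet_Icc), inter_assoc, inter_self,
          Measure.restrict_restrict hR]
    have h01 := h _ ⟨_, _, hS', hT', inter_subset_right, inter_subset_right, rfl⟩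
    rwa [setIntegral_setIntegral_eq_prod hD hS' hT' inter_subset_right inter_subset_right,
      ← Measure.prod_restrict, hrestrict S hS, hrestrict T hT, Measure.prod_restrict] at h01
  · rintro h _ ⟨S, T, hS, hT, hS01, hT01, rfl⟩
    rw [setIntegral_setIntegral_eq_prod hD hS hT hS01 hT01]
    exact h S T hS hT

lemma cutDist_nonneg (U W : ℝ → ℝ → ℝ) : 0 ≤ cutDist U W :=
  Real.sInf_nonneg <| by
    rintro _ ⟨φ, -, rfl⟩
    exact cutNorm_nonneg _

lemma cutDist_le_cutNorm {φ : ℝ → ℝ} (hφ : IsInvMeasurePreserving φ) (U W : ℝ → ℝ → ℝ) :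
    cutDist U W ≤ cutNorm fun x y => U x y - W (φ x) (φ y) :=
  csInf_le ⟨0, by rintro _ ⟨φ, -, rfl⟩; exact cutNorm_nonneg _⟩ ⟨φ, hφ, rfl⟩

lemma isInvMeasurePreserving_id : IsInvMeasurePreserving id :=
  ⟨mapsTo_id _, .id _, id, mapsTo_id _, .id _, fun _ _ => rfl, fun _ _ => rfl⟩

lemma exists_cutNorm_lt_of_cutDist_lt {U W : ℝ → ℝ → ℝ} (h : cutDist U W < c) :
    ∃ φ, IsInvMeasurePreserving φ ∧ cutNorm (fun x y => U x y - W (φ x) (φ y)) < c := by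
  obtain ⟨_, ⟨φ, hφ, rfl⟩, hlt⟩ :=
    exists_lt_of_csInf_lt (by exact ⟨_, id, isInvMeasurePreserving_id, rfl⟩) h
  exact ⟨φ, hφ, hlt⟩

open scoped Classical in
/-- The edges of `F` as increasing pairs, the indexing used by `homDensity`. -/
noncomputable def edgePairs {m : ℕ} (F : SimpleGraph (Fin m)) : Finset (Fin m × Fin m) :=
  Finset.univ.filter fun p => p.1 < p.2 ∧ F.Adj p.1 p.2

lemma mem_edgePairs {m : ℕ} {F : SimpleGraph (Fin m)} {p : Fin m × Fin m} :
    p ∈ edgePairs F ↔ p.1 < p.2 ∧ F.Adj p.1 p.2 := by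
  simp [edgePairs]

lemma homDensity_eq_decoratedDensity {m : ℕ} (F : SimpleGraph (Fin m)) (W : ℝ → ℝ → ℝ) :
    homDensity F W = decoratedDensity μ01 (fun _ => W) (edgePairs F) := rfl

lemma homDensity_comp {m : ℕ} (F : SimpleGraph (Fin m)) {W : ℝ → ℝ → ℝ} (hW : IsGraphon W)
    {φ : ℝ → ℝ} (hφ : MeasurePreserving φ μ01 μ01) :
    homDensity F (fun x y => W (φ x) (φ y)) = homDensity F W := by
  have hpi := measurePreserving_pi (fun _ : Fin m => μ01) (fun _ => μ01) fun _ => hφ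
  have hmeas := (measurable_prod_kernel (fun _ => hW.isKernel) (edgePairs F)).aestronglyMeasurable
    (μ := (Measure.pi fun _ : Fin m => μ01).map fun x i => φ (x i))
  have hmap := integral_map hpi.aemeasurable hmeas
  rw [hpi.map_eq] at hmap
  exact hmap.symm

theorem abs_homDensity_sub_le_cutDist {m : ℕ} (F : SimpleGraph (Fin m)) {U W : ℝ → ℝ → ℝ}
    (hU : IsGraphon U) (hW : IsGraphon W) :
    |homDensity F U - homDensity F W| ≤ (edgePairs F).card * cutDist U W := by
  have habove : ∀ c, cutDist U W < c →
      |homDensity F U - homDensity F W| ≤ (edgePairs F).card * c := fun c hc => by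
    obtain ⟨φ, hφ, hcut⟩ := exists_cutNorm_lt_of_cutDist_lt hc
    have hWφ := hW.comp hφ.2.1.measurable
    rw [← homDensity_comp F hW hφ.2.1]
    exact abs_decoratedDensity_sub_le
      (fun _ => (cutNorm_le_iff_cutBound (hU.integrable.sub hWφ.integrable)).1 hcut.le)
      (fun _ => hU.isKernel) (fun _ => hWφ.isKernel) fun e he => (mem_edgePairs.1 he).1
  exact ge_of_tendsto (((continuous_const_mul _).tendsto _).mono_left nhdsWithin_le_nhds)
    (eventually_mem_nhdsWithin.mono habove : ∀ᶠ c in nhdsWithin _ (Ioi _), _)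

end CutDistance

section Equipartitions

open scoped BigOperators

variable {Ω V : Type*} [MeasurableSpace Ω] [Fintype V] [MeasurableSpace V]

/-- A partition of `Ω` into parts of equal measure indexed by `V`, given by the map `q` sending each
point to its part. It turns a weighted graph `B` on `V` into the step kernel `B (q x) (q y)`. -/
structure IsEquipartition (μ : Measure Ω) (q : Ω → V) : Prop where
  measurable : Measurable q
  measureReal_fibre : ∀ v, μ.real (q ⁻¹' {v}) = (Fintype.card V : ℝ)⁻¹

variable {μ : Measure Ω} {q : Ω → V}

lemma IsEquipartition.pi [IsProbabilityMeasure μ] {κ : Type*} [Fintype κ]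
    [DecidableEq κ] (hq : IsEquipartition μ q) :
    IsEquipartition (Measure.pi fun _ : κ => μ) fun x i => q (x i) where
  measurable := measurable_pi_lambda _ fun i => hq.measurable.comp (measurable_pi_apply i)
  measureReal_fibre y := by
    have hbox : (fun x : κ → Ω => fun i => q (x i)) ⁻¹' {y} = univ.pi fun i => q ⁻¹' {y i} := by
      ext x
      simp [funext_iff]
    rw [hbox, measureReal_def, Measure.pi_pi, ENNReal.toReal_prod]
    simp_rw [← measureReal_def, hq.measureReal_fibre]
    simp

variable [MeasurableSingletonClass V]

lemma integral_comp_eq_sum_fibre (hq : Measurable q) (ν : Measure Ω) [IsFiniteMeasure ν]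
    (g : V → ℝ) : ∫ x, g (q x) ∂ν = ∑ v, ν.real (q ⁻¹' {v}) * g v := by
  rw [← integral_map hq.aemeasurable (measurable_of_countable g).aestronglyMeasurable,
    integral_fintype .of_finite]
  exact Finset.sum_congr rfl fun v _ => by
    rw [map_measureReal_apply hq (measurableSet_singleton v), smul_eq_mul]

lemma integrable_comp_prodMap {V : Type*} [Finite V] [MeasurableSpace V]
    [MeasurableSingletonClass V] {q : Ω → V} (hq : Measurable q) (D : V → V → ℝ)
    (ν : Measure (Ω × Ω)) [IsFiniteMeasure ν] : Integrable (fun p => D (q p.1) (q p.2)) ν :=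
  (Integrable.of_finite (f := fun v : V × V => D v.1 v.2)).comp_measurable (hq.prodMap hq)

lemma IsEquipartition.comp_equiv {V' : Type*} [Fintype V'] [MeasurableSpace V']
    (hq : IsEquipartition μ q) (e : V ≃ V') : IsEquipartition μ fun x => e (q x) where
  measurable := (measurable_of_countable e).comp hq.measurable
  measureReal_fibre v := by
    have hfibre : (fun x => e (q x)) ⁻¹' {v} = q ⁻¹' {e.symm v} := by
      ext x
      simp [Equiv.eq_symm_apply]
    rw [hfibre, hq.measureReal_fibre, Fintype.card_congr e]

variable [IsProbabilityMeasure μ]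

lemma IsEquipartition.integral_comp (hq : IsEquipartition μ q) (g : V → ℝ) :
    ∫ x, g (q x) ∂μ = 𝔼 v, g v := by
  simp_rw [integral_comp_eq_sum_fibre hq.measurable, hq.measureReal_fibre, ← Finset.mul_sum,
    Fintype.expect_eq_sum_div_card, div_eq_inv_mul]

lemma decoratedDensity_comp_equipartition {κ : Type*} [Fintype κ] [DecidableEq κ]
    (hq : IsEquipartition μ q) (B : V → V → ℝ) (E : Finset (κ × κ)) :
    decoratedDensity μ (fun _ x y => B (q x) (q y)) E =
      𝔼 y : κ → V, ∏ e ∈ E, B (y e.1) (y e.2) :=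
  hq.pi.integral_comp fun y => ∏ e ∈ E, B (y e.1) (y e.2)

lemma CutNormLE.cutBound [Nonempty V] {D : V → V → ℝ} {c : ℝ} (h : CutNormLE D c)
    (hq : IsEquipartition μ q) : CutBound μ (fun x y => D (q x) (q y)) c := fun S T _ _ => by
  have hcard : (Fintype.card V : ℝ) ≠ 0 := by simp
  have hfreq : ∀ (R : Set Ω) v,
      Fintype.card V * (μ.restrict R).real (q ⁻¹' {v}) ∈ Icc (0 : ℝ) 1 := fun R v => by
    refine ⟨by positivity, ?_⟩
    calc Fintype.card V * (μ.restrict R).real (q ⁻¹' {v})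
        ≤ Fintype.card V * μ.real (q ⁻¹' {v}) := by
          gcongr
          exact ENNReal.toReal_mono (measure_ne_top _ _) (Measure.restrict_apply_le _ _)
      _ = 1 := by rw [hq.measureReal_fibre, mul_inv_cancel₀ hcard]
  have hint : Integrable (fun p : Ω × Ω => D (q p.1) (q p.2))
      ((μ.restrict S).prod (μ.restrict T)) :=
    integrable_comp_prodMap hq.measurable D _
  have heq : ∫ p in S ×ˢ T, D (q p.1) (q p.2) ∂(μ.prod μ) = 𝔼 u, 𝔼 v, D u v *
      (Fintype.card V * (μ.restrict S).real (q ⁻¹' {u})) *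
      (Fintype.card V * (μ.restrict T).real (q ⁻¹' {v})) := by
    rw [← Measure.prod_restrict, integral_prod _ hint]
    simp_rw [fun x => integral_comp_eq_sum_fibre hq.measurable (μ.restrict T) (D (q x))]
    rw [integral_comp_eq_sum_fibre hq.measurable (μ.restrict S) fun u =>
      ∑ v, (μ.restrict T).real (q ⁻¹' {v}) * D u v]
    simp_rw [Fintype.expect_eq_sum_div_card, Finset.mul_sum, Finset.sum_div]
    refine Finset.sum_congr rfl fun u _ => Finset.sum_congr rfl fun v _ => ?_
    field_simp
  rw [heq]
  exact h _ _ (hfreq S) (hfreq T)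

lemma prod_edgePairs_eq_prod_edgeFinset {V : Type*} {B : V → V → ℝ} (hB : IsWeightedGraph B) {m : ℕ}
    (F : SimpleGraph (Fin m)) [DecidableRel F.Adj] (y : Fin m → V) :
    ∏ e ∈ edgePairs F, B (y e.1) (y e.2) = ∏ e ∈ F.edgeFinset, hB.edgeWeight (e.map y) := by
  refine Finset.prod_nbij (fun p => s(p.1, p.2)) (fun p hp => ?_) (fun p hp p' hp' h => ?_)
    (fun e he => ?_) fun p _ => rfl
  · simpa using (mem_edgePairs.1 hp).2
  · have hlt := (mem_edgePairs.1 hp).1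
    have hlt' := (mem_edgePairs.1 hp').1
    rcases Sym2.eq_iff.1 h with ⟨h1, h2⟩ | ⟨h1, h2⟩
    · exact Prod.ext h1 h2
    · grind
  · induction e using Sym2.ind with
    | _ i j =>
      have hij : F.Adj i j := by simpa using he
      rcases hij.ne.lt_or_gt with hlt | hlt
      · exact ⟨(i, j), mem_edgePairs.2 ⟨hlt, hij⟩, rfl⟩
      · exact ⟨(j, i), mem_edgePairs.2 ⟨hlt, hij.symm⟩, Sym2.eq_swap⟩

lemma homDensity_comp_equipartition {q : ℝ → V} (hq : IsEquipartition μ01 q)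
    {B : V → V → ℝ} (hB : IsWeightedGraph B) {m : ℕ} (F : SimpleGraph (Fin m))
    [DecidableRel F.Adj] :
    homDensity F (fun x y => B (q x) (q y)) = hB.edgeDensity F.edgeFinset := by
  rw [homDensity_eq_decoratedDensity, decoratedDensity_comp_equipartition hq B]
  exact Finset.expect_congr rfl fun y _ => prod_edgePairs_eq_prod_edgeFinset hB F y

lemma IsWeightedGraph.isGraphon_comp {V : Type*} [Countable V] [MeasurableSpace V]
    [MeasurableSingletonClass V] {B : V → V → ℝ} (hB : IsWeightedGraph B) {q : ℝ → V}
    (hq : Measurable q) : IsGraphon fun x y => B (q x) (q y) :=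
  ⟨(measurable_of_countable fun v : V × V => B v.1 v.2).comp (hq.prodMap hq),
    fun _ _ => hB.symm _ _, fun _ _ => hB.mem_Icc _ _⟩

end Equipartitions

section IntervalExchange

/-- The interval `[i/N, (i+1)/N)`. -/
def gridInterval (N : ℕ) (i : Fin N) : Set ℝ := Ico ((i : ℝ) / N) ((i + 1 : ℝ) / N)

variable {N : ℕ}

lemma measurableSet_gridInterval (i : Fin N) : MeasurableSet (gridInterval N i) :=
  measurableSet_Ico

lemma preimage_add_gridInterval (i j : Fin N) :
    (fun x => ((j : ℝ) - i) / N + x) ⁻¹' gridInterval N j = gridInterval N i := by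
  rw [gridInterval, preimage_const_add_Ico, gridInterval]
  congr 1 <;> ring

variable [NeZero N]

/-- The index of the interval `[i/N, (i+1)/N)` containing `x ∈ [0,1)`; it is a junk value outside
`[0,1)`. -/
noncomputable def cell (N : ℕ) [NeZero N] (x : ℝ) : Fin N := Fin.ofNat N ⌊N * x⌋₊

lemma measurable_cell : Measurable (cell N) :=
  (measurable_of_countable (Fin.ofNat N)).comp (Nat.measurable_floor.comp (measurable_const_mul _))

lemma val_cell {x : ℝ} (hx : x ∈ Ico (0 : ℝ) 1) : (cell N x : ℕ) = ⌊N * x⌋₊ := by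
  have hN : (0 : ℝ) < N := Nat.cast_pos.2 (NeZero.pos N)
  refine Nat.mod_eq_of_lt ((Nat.floor_lt (mul_nonneg hN.le hx.1)).2 ?_)
  exact mul_lt_of_lt_one_right hN hx.2

lemma mem_gridInterval_iff {i : Fin N} {x : ℝ} :
    x ∈ gridInterval N i ↔ x ∈ Ico (0 : ℝ) 1 ∧ cell N x = i := by
  have hN : (0 : ℝ) < N := Nat.cast_pos.2 (NeZero.pos N)
  have hfloor : 0 ≤ x → (x ∈ gridInterval N i ↔ ⌊N * x⌋₊ = i) := fun hx => by
    rw [Nat.floor_eq_iff (mul_nonneg hN.le hx), gridInterval, mem_Ico, div_le_iff₀ hN,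
      lt_div_iff₀ hN, mul_comm x]
  refine ⟨fun hx => ?_, fun ⟨hx, hcell⟩ => (hfloor hx.1).2 (by rw [← val_cell hx, hcell])⟩
  have hx01 : x ∈ Ico (0 : ℝ) 1 := by
    refine ⟨le_trans (by positivity) hx.1, hx.2.trans_le ((div_le_one hN).2 ?_)⟩
    exact_mod_cast i.2
  exact ⟨hx01, Fin.ext ((val_cell hx01).trans ((hfloor hx01.1).1 hx))⟩

lemma mem_gridInterval_cell {x : ℝ} (hx : x ∈ Ico (0 : ℝ) 1) : x ∈ gridInterval N (cell N x) :=
  mem_gridInterval_iff.2 ⟨hx, rfl⟩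

lemma cell_mul_divNat {k : ℕ} [NeZero k] {x : ℝ} (hx : x ∈ Ico (0 : ℝ) 1) :
    (finProdFinEquiv.symm (cell (N * k) x)).1 = cell N x := by
  have hk : (k : ℝ) ≠ 0 := Nat.cast_ne_zero.2 (NeZero.ne k)
  refine Fin.ext ?_
  change (cell (N * k) x : ℕ) / k = _
  rw [val_cell hx, val_cell hx, ← Nat.floor_div_natCast, Nat.cast_mul]
  congr 1
  field_simp

lemma ae_mem_Ico : ∀ᵐ x ∂μ01, x ∈ Ico (0 : ℝ) 1 := by
  rw [μ01, ← restrict_Ico_eq_restrict_Icc]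
  exact ae_restrict_mem measurableSet_Ico

lemma μ01_eq_sum_gridInterval (N : ℕ) [NeZero N] :
    μ01 = Measure.sum fun i => volume.restrict (gridInterval N i) := by
  have hdisjoint : Pairwise (Function.onFun Disjoint (gridInterval N)) := fun i j hij =>
    disjoint_left.2 fun x hi hj => hij <|
      (mem_gridInterval_iff.1 hi).2.symm.trans (mem_gridInterval_iff.1 hj).2
  rw [μ01, ← restrict_Ico_eq_restrict_Icc, ← Measure.restrict_iUnion hdisjoint
    measurableSet_gridInterval]
  congr 1
  ext x
  simp [mem_gridInterval_iff]

lemma isEquipartition_cell : IsEquipartition μ01 (cell N) where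
  measurable := measurable_cell
  measureReal_fibre i := by
    have hae : (cell N ⁻¹' {i} : Set ℝ) =ᵐ[μ01] gridInterval N i := by
      filter_upwards [ae_mem_Ico] with x hx
      exact propext ⟨fun h => mem_gridInterval_iff.2 ⟨hx, h⟩, fun h => (mem_gridInterval_iff.1 h).2⟩
    have hsub : gridInterval N i ⊆ Icc 0 1 := fun x hx =>
      Ico_subset_Icc_self (mem_gridInterval_iff.1 hx).1
    rw [measureReal_congr hae, measureReal_restrict_apply' measurableSet_Icc,
      inter_eq_left.2 hsub, gridInterval, Real.volume_real_Ico_of_le (by gcongr; simp)]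
    simp [add_div]

variable (σ : Equiv.Perm (Fin N)) {x : ℝ}

open scoped Classical in
/-- The interval exchange moving the `i`-th interval of length `1/N` onto the `σ i`-th one by a
translation. -/
noncomputable def intervalExchange (x : ℝ) : ℝ :=
  if x ∈ Ico (0 : ℝ) 1 then ((σ (cell N x) : ℝ) - cell N x) / N + x else x

lemma intervalExchange_of_mem {i : Fin N} (hx : x ∈ gridInterval N i) :
    intervalExchange σ x = ((σ i : ℝ) - i) / N + x := by
  obtain ⟨hx01, rfl⟩ := mem_gridInterval_iff.1 hx
  exact if_pos hx01

lemma intervalExchange_mem {i : Fin N} (hx : x ∈ gridInterval N i) :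
    intervalExchange σ x ∈ gridInterval N (σ i) := by
  rw [intervalExchange_of_mem σ hx]
  rwa [← preimage_add_gridInterval i (σ i)] at hx

lemma intervalExchange_mem_Ico (hx : x ∈ Ico (0 : ℝ) 1) :
    intervalExchange σ x ∈ Ico (0 : ℝ) 1 :=
  (mem_gridInterval_iff.1 (intervalExchange_mem σ (mem_gridInterval_cell hx))).1

lemma cell_intervalExchange (hx : x ∈ Ico (0 : ℝ) 1) :
    cell N (intervalExchange σ x) = σ (cell N x) :=
  (mem_gridInterval_iff.1 (intervalExchange_mem σ (mem_gridInterval_cell hx))).2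

lemma intervalExchange_symm_apply (x : ℝ) :
    intervalExchange σ.symm (intervalExchange σ x) = x := by
  by_cases hx : x ∈ Ico (0 : ℝ) 1
  · have hi := mem_gridInterval_cell (N := N) hx
    rw [intervalExchange_of_mem _ (intervalExchange_mem σ hi), intervalExchange_of_mem σ hi,
      Equiv.symm_apply_apply]
    ring
  · simp only [intervalExchange, if_neg hx]

lemma mapsTo_intervalExchange :
    MapsTo (intervalExchange σ) (Icc (0 : ℝ) 1) (Icc (0 : ℝ) 1) := fun x hx => by
  by_cases hx' : x ∈ Ico (0 : ℝ) 1
  · exact Ico_subset_Icc_self (intervalExchange_mem_Ico σ hx')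
  · rwa [intervalExchange, if_neg hx']

lemma measurePreserving_intervalExchange : MeasurePreserving (intervalExchange σ) μ01 μ01 := by
  have hmeas : Measurable (intervalExchange σ) :=
    Measurable.ite measurableSet_Ico (((measurable_of_countable fun i : Fin N =>
      ((σ i : ℝ) - i) / N).comp measurable_cell).add measurable_id) measurable_id
  have hpiece : ∀ i, (volume.restrict (gridInterval N i)).map (intervalExchange σ) =
      volume.restrict (gridInterval N (σ i)) := fun i => by
    have htranslate := (measurePreserving_add_left volume (((σ i : ℝ) - i) / N)).restrict_preimage
      (measurableSet_gridInterval (σ i))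
    rw [preimage_add_gridInterval] at htranslate
    rw [← htranslate.map_eq]
    refine Measure.map_congr ?_
    filter_upwards [ae_restrict_mem (measurableSet_gridInterval i)] with x hx
    exact intervalExchange_of_mem σ hx
  refine ⟨hmeas, ?_⟩
  conv_lhs => rw [μ01_eq_sum_gridInterval N]
  rw [Measure.map_sum hmeas.aemeasurable]
  simp_rw [hpiece]
  rw [μ01_eq_sum_gridInterval N]
  exact Measure.sum_comp_equiv σ (fun i => volume.restrict (gridInterval N i))

lemma isInvMeasurePreserving_intervalExchange : IsInvMeasurePreserving (intervalExchange σ) :=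
  ⟨mapsTo_intervalExchange σ, measurePreserving_intervalExchange σ, intervalExchange σ.symm,
    mapsTo_intervalExchange σ.symm, measurePreserving_intervalExchange σ.symm,
    fun x _ => intervalExchange_symm_apply σ x, fun x _ => intervalExchange_symm_apply σ.symm x⟩

end IntervalExchange

section StepApproximation

lemma ae_prod_mem_Ico :
    ∀ᵐ p ∂(μ01.prod μ01), p.1 ∈ Ico (0 : ℝ) 1 ∧ p.2 ∈ Ico (0 : ℝ) 1 :=
  (Measure.quasiMeasurePreserving_fst.ae ae_mem_Ico).and
    (Measure.quasiMeasurePreserving_snd.ae ae_mem_Ico)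

lemma IsGraphon.exists_continuous_integral_abs_sub_le {W : ℝ → ℝ → ℝ} (hW : IsGraphon W) {ε : ℝ}
    (hε : 0 < ε) : ∃ g : ℝ → ℝ → ℝ, IsGraphon g ∧ Continuous (fun p : ℝ × ℝ => g p.1 p.2) ∧
      ∫ p, |W p.1 p.2 - g p.1 p.2| ∂(μ01.prod μ01) ≤ ε := by
  obtain ⟨f, -, hf, hfcont, hfint⟩ := hW.integrable.exists_hasCompactSupport_integral_sub_le hε
  -- Symmetrizing and clamping `f` does not increase its distance to `W`.
  let g : ℝ → ℝ → ℝ := fun x y => max 0 (min 1 ((f (x, y) + f (y, x)) / 2))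
  have hgcont : Continuous fun p : ℝ × ℝ => g p.1 p.2 := by fun_prop
  have hg : IsGraphon g :=
    ⟨hgcont.measurable, fun x y => by simp only [g, add_comm],
      fun x y => ⟨le_max_left _ _, max_le zero_le_one (min_le_left _ _)⟩⟩
  refine ⟨g, hg, hgcont, ?_⟩
  let d : ℝ × ℝ → ℝ := fun p => |W p.1 p.2 - f p|
  have hd : Integrable d (μ01.prod μ01) := (hW.integrable.sub hfint).abs
  have hdswap : Integrable (fun p => d p.swap) (μ01.prod μ01) := hd.swap
  have hle : ∀ p : ℝ × ℝ, |W p.1 p.2 - g p.1 p.2| ≤ (d p + d p.swap) / 2 := fun p =>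
    calc |W p.1 p.2 - g p.1 p.2| ≤ |W p.1 p.2 - (f p + f p.swap) / 2| :=
          sq_le_sq.1 (sq_sub_clamp_le (hW.2.2 p.1 p.2) _)
      _ = |(W p.1 p.2 - f p) + (W p.2 p.1 - f p.swap)| / 2 := by
          rw [hW.2.1 p.2 p.1, ← abs_two (α := ℝ), ← abs_div, abs_two]
          ring_nf
      _ ≤ (d p + d p.swap) / 2 := by
          gcongr
          exact abs_add_le _ _
  calc ∫ p, |W p.1 p.2 - g p.1 p.2| ∂(μ01.prod μ01)
      ≤ ∫ p, (d p + d p.swap) / 2 ∂(μ01.prod μ01) :=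
        integral_mono (hW.integrable.sub hg.integrable).abs ((hd.add hdswap).div_const 2) hle
    _ = ∫ p, d p ∂(μ01.prod μ01) := by
        rw [integral_div, integral_add hd hdswap, integral_prod_swap d, add_self_div_two]
    _ ≤ ε := hf

variable {N : ℕ} [NeZero N]

lemma cell_div_mem_Icc (x : ℝ) : (cell N x : ℝ) / N ∈ Icc (0 : ℝ) 1 :=
  ⟨by positivity, div_le_one_of_le₀ (by exact_mod_cast (cell N x).2.le) N.cast_nonneg⟩

lemma abs_sub_cell_div_le {x : ℝ} (hx : x ∈ Ico (0 : ℝ) 1) : |x - cell N x / N| ≤ 1 / N := by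
  obtain ⟨hlower, hupper⟩ := mem_gridInterval_cell (N := N) hx
  rw [add_div] at hupper
  rw [abs_of_nonneg (sub_nonneg.2 hlower)]
  linarith

lemma exists_forall_abs_sub_cell_le {g : ℝ → ℝ → ℝ} (hg : Continuous fun p : ℝ × ℝ => g p.1 p.2)
    {ε : ℝ} (hε : 0 < ε) :
    ∃ N₀ : ℕ, ∀ N [NeZero N], N₀ ≤ N → ∀ x ∈ Ico (0 : ℝ) 1, ∀ y ∈ Ico (0 : ℝ) 1,
      |g x y - g (cell N x / N) (cell N y / N)| ≤ ε := by
  have hunif : UniformContinuousOn (fun p : ℝ × ℝ => g p.1 p.2) (Icc 0 1 ×ˢ Icc 0 1) :=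
    (isCompact_Icc.prod isCompact_Icc).uniformContinuousOn_of_continuous hg.continuousOn
  obtain ⟨δ, hδ, hclose⟩ := Metric.uniformContinuousOn_iff.1 hunif ε hε
  obtain ⟨n, hn⟩ := exists_nat_one_div_lt hδ
  refine ⟨n + 1, fun N _ hnN x hx y hy => ?_⟩
  have hmesh : 1 / (N : ℝ) < δ :=
    (one_div_le_one_div_of_le (by positivity) (by exact_mod_cast hnN)).trans_lt hn
  refine (hclose (x, y) ⟨Ico_subset_Icc_self hx, Ico_subset_Icc_self hy⟩
    (cell N x / N, cell N y / N) ⟨cell_div_mem_Icc x, cell_div_mem_Icc y⟩ ?_).le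
  exact max_lt ((abs_sub_cell_div_le hx).trans_lt hmesh) ((abs_sub_cell_div_le hy).trans_lt hmesh)

theorem IsGraphon.exists_forall_isWeightedGraph_integral_abs_sub_le {W : ℝ → ℝ → ℝ}
    (hW : IsGraphon W) {ε : ℝ} (hε : 0 < ε) :
    ∃ N₀ : ℕ, ∀ N [NeZero N], N₀ ≤ N → ∃ B : Fin N → Fin N → ℝ, IsWeightedGraph B ∧
      ∫ p, |W p.1 p.2 - B (cell N p.1) (cell N p.2)| ∂(μ01.prod μ01) ≤ ε := by
  obtain ⟨g, hg, hgcont, hWg⟩ := hW.exists_continuous_integral_abs_sub_le (half_pos hε)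
  obtain ⟨N₀, hmesh⟩ := exists_forall_abs_sub_cell_le hgcont (half_pos hε)
  refine ⟨N₀, fun N _ hN => ⟨fun i j => g (i / N) (j / N),
    ⟨fun _ _ => hg.2.1 _ _, fun _ _ => hg.2.2 _ _⟩, ?_⟩⟩
  have hint : Integrable (fun p : ℝ × ℝ => |W p.1 p.2 - g p.1 p.2|) (μ01.prod μ01) :=
    (hW.integrable.sub hg.integrable).abs
  calc ∫ p, |W p.1 p.2 - g (cell N p.1 / N) (cell N p.2 / N)| ∂(μ01.prod μ01)
      ≤ ∫ p, (|W p.1 p.2 - g p.1 p.2| + ε / 2) ∂(μ01.prod μ01) := by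
        refine integral_mono_of_nonneg (.of_forall fun _ => abs_nonneg _)
          (hint.add (integrable_const _)) ?_
        filter_upwards [ae_prod_mem_Ico] with p hp
        exact (abs_sub_le _ (g p.1 p.2) _).trans <| by
          gcongr
          exact hmesh N hN _ hp.1 _ hp.2
    _ = (∫ p, |W p.1 p.2 - g p.1 p.2| ∂(μ01.prod μ01)) + ε / 2 := by
        rw [integral_add hint (integrable_const _), integral_const, probReal_univ, one_smul]
    _ ≤ ε := by linarith

end StepApproximation

section InverseCounting

lemma card_edgePairs_le {m : ℕ} (F : SimpleGraph (Fin m)) : (edgePairs F).card ≤ m ^ 2 :=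
  (Finset.card_le_univ _).trans (by simp [sq])

lemma abs_homDensity_sub_le_integral {m : ℕ} (F : SimpleGraph (Fin m)) {U W : ℝ → ℝ → ℝ}
    (hU : IsGraphon U) (hW : IsGraphon W) :
    |homDensity F U - homDensity F W| ≤
      m ^ 2 * ∫ p, |U p.1 p.2 - W p.1 p.2| ∂(μ01.prod μ01) := by
  refine (abs_decoratedDensity_sub_le
    (fun _ => CutBound.of_integral_abs (hU.integrable.sub hW.integrable) le_rfl)
    (fun _ => hU.isKernel) (fun _ => hW.isKernel) fun e he => (mem_edgePairs.1 he).1).trans ?_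
  gcongr
  exact_mod_cast card_edgePairs_le F

variable {N k : ℕ} [NeZero N]

lemma abs_edgeDensity_sub_le {U W : ℝ → ℝ → ℝ} (hU : IsGraphon U) (hW : IsGraphon W)
    {A B : Fin N → Fin N → ℝ} (hA : IsWeightedGraph A) (hB : IsWeightedGraph B) {θ : ℝ}
    (hUA : ∫ p, |U p.1 p.2 - A (cell N p.1) (cell N p.2)| ∂(μ01.prod μ01) ≤ θ)
    (hWB : ∫ p, |W p.1 p.2 - B (cell N p.1) (cell N p.2)| ∂(μ01.prod μ01) ≤ θ)
    (F : SimpleGraph (Fin k)) [DecidableRel F.Adj] :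
    |hA.edgeDensity F.edgeFinset - hB.edgeDensity F.edgeFinset| ≤
      |homDensity F U - homDensity F W| + 2 * (k ^ 2 * θ) := by
  have hcell := isEquipartition_cell (N := N)
  have hdist : ∀ {W B} (hW : IsGraphon W) (hB : IsWeightedGraph B),
      ∫ p, |W p.1 p.2 - B (cell N p.1) (cell N p.2)| ∂(μ01.prod μ01) ≤ θ →
      |homDensity F W - hB.edgeDensity F.edgeFinset| ≤ k ^ 2 * θ := fun hW hB h => by
    rw [← homDensity_comp_equipartition hcell hB F]
    exact (abs_homDensity_sub_le_integral F hW (hB.isGraphon_comp hcell.measurable)).trans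
      (by gcongr)
  have hUA' := abs_sub_le_iff.1 (hdist hU hA hUA)
  have hWB' := abs_sub_le_iff.1 (hdist hW hB hWB)
  have hUW := abs_sub_le_iff.1 (le_refl |homDensity F U - homDensity F W|)
  exact abs_sub_le_iff.2 ⟨by linarith, by linarith⟩

lemma exists_cutBound_of_cutNormLE_blowUp [NeZero k] {A B : Fin N → Fin N → ℝ}
    {σ : Equiv.Perm (Fin N × Fin k)} {c : ℝ}
    (h : CutNormLE (fun u v => A u.1 v.1 - B (σ u).1 (σ v).1) c) :
    ∃ φ, IsInvMeasurePreserving φ ∧ CutBound μ01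
      (fun x y => A (cell N x) (cell N y) - B (cell N (φ x)) (cell N (φ y))) c := by
  let τ : Equiv.Perm (Fin (N * k)) := finProdFinEquiv.permCongr σ
  let q : ℝ → Fin N × Fin k := fun x => finProdFinEquiv.symm (cell (N * k) x)
  have hq : IsEquipartition μ01 q := isEquipartition_cell.comp_equiv finProdFinEquiv.symm
  have hcell : ∀ x ∈ Ico (0 : ℝ) 1, (q x).1 = cell N x := fun x hx => cell_mul_divNat hx
  have hmap : ∀ x ∈ Ico (0 : ℝ) 1, (σ (q x)).1 = cell N (intervalExchange τ x) := fun x hx => by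
    rw [← cell_mul_divNat (k := k) (intervalExchange_mem_Ico τ hx), cell_intervalExchange τ hx,
      Equiv.permCongr_apply, Equiv.symm_apply_apply]
  refine ⟨intervalExchange τ, isInvMeasurePreserving_intervalExchange τ, fun S T hS hT => ?_⟩
  refine le_of_eq_of_le (congrArg _ (integral_congr_ae (ae_restrict_of_ae ?_)))
    (h.cutBound hq S T hS hT)
  filter_upwards [ae_prod_mem_Ico] with p ⟨hp₁, hp₂⟩
  rw [hcell _ hp₁, hcell _ hp₂, hmap _ hp₁, hmap _ hp₂]

lemma cutDist_le_of_integral_abs_sub_le {U W U' W' : ℝ → ℝ → ℝ} (hU : IsGraphon U)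
    (hW : IsGraphon W) (hU' : IsGraphon U') (hW' : IsGraphon W') {φ : ℝ → ℝ}
    (hφ : IsInvMeasurePreserving φ) {a b c : ℝ}
    (hUU' : ∫ p, |U p.1 p.2 - U' p.1 p.2| ∂(μ01.prod μ01) ≤ a)
    (hcut : CutBound μ01 (fun x y => U' x y - W' (φ x) (φ y)) c)
    (hWW' : ∫ p, |W p.1 p.2 - W' p.1 p.2| ∂(μ01.prod μ01) ≤ b) : cutDist U W ≤ a + c + b := by
  have hWφ := hW.comp hφ.2.1.measurable
  have hWφ' := hW'.comp hφ.2.1.measurable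
  have hφprod := hφ.2.1.prod hφ.2.1
  have hWW'φ : ∫ p, |W' (φ p.1) (φ p.2) - W (φ p.1) (φ p.2)| ∂(μ01.prod μ01) ≤ b := by
    have hmeas := (hW.integrable.sub hW'.integrable).abs.aestronglyMeasurable
    have hmap := integral_map hφprod.aemeasurable (hφprod.map_eq.symm ▸ hmeas)
    rw [hφprod.map_eq] at hmap
    simp_rw [abs_sub_comm (W' _ _)]
    exact hmap.symm.trans_le hWW'
  have hUU'int := hU.integrable.sub hU'.integrable
  have hW'Wint := hWφ'.integrable.sub hWφ.integrable
  have hleft : CutBound μ01 (fun x y => U x y - U' x y) a := .of_integral_abs hUU'int hUU'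
  have hright : CutBound μ01 (fun x y => W' (φ x) (φ y) - W (φ x) (φ y)) b :=
    .of_integral_abs hW'Wint hWW'φ
  have hsum := (hleft.add hUU'int (hU'.integrable.sub hWφ'.integrable) hcut).add
    (hUU'int.add (hU'.integrable.sub hWφ'.integrable)) hW'Wint hright
  simp only [sub_add_sub_cancel] at hsum
  exact (cutDist_le_cutNorm hφ U W).trans
    ((cutNorm_le_iff_cutBound (hU.integrable.sub hWφ.integrable)).2 hsum)

theorem exists_forall_homDensity_imp_cutDist_le {ε : ℝ} (hε : 0 < ε) :
    ∃ k : ℕ, ∃ η : ℝ, 0 < η ∧ ∀ {U W : ℝ → ℝ → ℝ}, IsGraphon U → IsGraphon W →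
      (∀ F : SimpleGraph (Fin k), |homDensity F U - homDensity F W| ≤ η) → cutDist U W ≤ ε := by
  classical
  obtain ⟨k, hk, η, hη, hfinite⟩ := exists_forall_edgeDensity_imp_cutNormLE (half_pos hε)
  have : NeZero k := ⟨hk.ne'⟩
  refine ⟨k, η / 2, half_pos hη, fun {U W} hU hW hclose => ?_⟩
  obtain ⟨θ, hθ, hθη, hθε⟩ : ∃ θ : ℝ, 0 < θ ∧ (k : ℝ) ^ 2 * θ ≤ η / 4 ∧ θ ≤ ε / 4 := by
    refine ⟨min (η / 4 / k ^ 2) (ε / 4), by positivity, ?_, min_le_right _ _⟩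
    rw [← le_div_iff₀' (by positivity)]
    exact min_le_left _ _
  obtain ⟨M, hM⟩ := hU.exists_forall_isWeightedGraph_integral_abs_sub_le hθ
  obtain ⟨M', hM'⟩ := hW.exists_forall_isWeightedGraph_integral_abs_sub_le hθ
  let N := max M M' + 1
  obtain ⟨A, hA, hUA⟩ := hM N (by omega)
  obtain ⟨B, hB, hWB⟩ := hM' N (by omega)
  obtain ⟨σ, hσ⟩ := hfinite hA hB fun E hE => by
    obtain ⟨F, rfl⟩ : ∃ F : SimpleGraph (Fin k), F.edgeFinset = E :=
      ⟨.fromEdgeSet E, by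
        ext e
        have := @hE e
        grind [SimpleGraph.mem_edgeFinset, SimpleGraph.edgeSet_fromEdgeSet,
          SimpleGraph.edgeSet_top]⟩
    linarith [hclose F, abs_edgeDensity_sub_le hU hW hA hB hUA hWB F]
  obtain ⟨φ, hφ, hcut⟩ := exists_cutBound_of_cutNormLE_blowUp hσ
  have hcell := measurable_cell (N := N)
  linarith [cutDist_le_of_integral_abs_sub_le hU hW (hA.isGraphon_comp hcell)
    (hB.isGraphon_comp hcell) hφ hUA hcut hWB]

end InverseCounting

section Convergence

variable {ι : Type*} {l : Filter ι} {U W : ι → ℝ → ℝ → ℝ}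

theorem tendsto_cutDist_zero_iff (hU : ∀ i, IsGraphon (U i)) (hW : ∀ i, IsGraphon (W i)) :
    Tendsto (fun i => cutDist (U i) (W i)) l (nhds 0) ↔ ∀ (m : ℕ) (F : SimpleGraph (Fin m)),
      Tendsto (fun i => dist (homDensity F (U i)) (homDensity F (W i))) l (nhds 0) := by
  refine ⟨fun h m F => ?_, fun h => ?_⟩
  · refine squeeze_zero (fun _ => dist_nonneg)
      (fun i => abs_homDensity_sub_le_cutDist F (hU i) (hW i)) ?_
    simpa using h.const_mul ((edgePairs F).card : ℝ)
  · refine (Metric.nhds_basis_closedBall.tendsto_right_iff).2 fun ε hε => ?_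
    obtain ⟨k, η, hη, hcut⟩ := exists_forall_homDensity_imp_cutDist_le hε
    have hclose : ∀ᶠ i in l, ∀ F : SimpleGraph (Fin k),
        |homDensity F (U i) - homDensity F (W i)| ≤ η :=
      eventually_all.2 fun F => (h k F).eventually_le_const hη
    filter_upwards [hclose] with i hi
    rw [mem_closedBall_zero_iff, Real.norm_of_nonneg (cutDist_nonneg _ _)]
    exact hcut (hU i) (hW i) hi

lemma tendsto_cutDist_atTop_zero_iff (Wn : ℕ → ℝ → ℝ → ℝ) :
    Tendsto (fun p : ℕ × ℕ => cutDist (Wn p.1) (Wn p.2)) atTop (nhds 0) ↔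
      ∀ ε : ℝ, 0 < ε → ∃ N : ℕ, ∀ i ≥ N, ∀ j ≥ N, cutDist (Wn i) (Wn j) ≤ ε := by
  simp only [Metric.nhds_basis_closedBall.tendsto_right_iff, mem_closedBall_zero_iff,
    Real.norm_of_nonneg (cutDist_nonneg _ _), eventually_atTop_prod_self']

end Convergence

/-- For a sequence of graphons: convergence of all homomorphism densities is equivalent to
being Cauchy in the cut distance; and convergence of all homomorphism densities to those of a
graphon `W` is equivalent to convergence to `W` in cut distance. -/
theorem graphon_conv_iff_cutDist (Wn : ℕ → ℝ → ℝ → ℝ) (hWn : ∀ n, IsGraphon (Wn n))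
    (W : ℝ → ℝ → ℝ) (hW : IsGraphon W) :
    ((∀ (m : ℕ) (F : SimpleGraph (Fin m)), ∃ L : ℝ,
        Filter.Tendsto (fun n => homDensity F (Wn n)) Filter.atTop (nhds L)) ↔
      (∀ ε : ℝ, 0 < ε → ∃ N : ℕ, ∀ i ≥ N, ∀ j ≥ N, cutDist (Wn i) (Wn j) ≤ ε)) ∧
    ((∀ (m : ℕ) (F : SimpleGraph (Fin m)),
        Filter.Tendsto (fun n => homDensity F (Wn n)) Filter.atTop (nhds (homDensity F W))) ↔
      Filter.Tendsto (fun n => cutDist (Wn n) W) Filter.atTop (nhds 0)) := by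
  constructor
  · calc (∀ (m : ℕ) (F : SimpleGraph (Fin m)), ∃ L : ℝ,
            Tendsto (fun n => homDensity F (Wn n)) atTop (nhds L))
        ↔ ∀ (m : ℕ) (F : SimpleGraph (Fin m)), CauchySeq fun n => homDensity F (Wn n) :=
          forall₂_congr fun m F => cauchy_map_iff_exists_tendsto.symm
      _ ↔ ∀ (m : ℕ) (F : SimpleGraph (Fin m)), Tendsto (fun p : ℕ × ℕ =>
            dist (homDensity F (Wn p.1)) (homDensity F (Wn p.2))) atTop (nhds 0) :=
          forall₂_congr fun m F => cauchySeq_iff_tendsto_dist_atTop_0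
      _ ↔ Tendsto (fun p : ℕ × ℕ => cutDist (Wn p.1) (Wn p.2)) atTop (nhds 0) :=
          (tendsto_cutDist_zero_iff (fun _ => hWn _) fun _ => hWn _).symm
      _ ↔ ∀ ε : ℝ, 0 < ε → ∃ N : ℕ, ∀ i ≥ N, ∀ j ≥ N, cutDist (Wn i) (Wn j) ≤ ε :=
          tendsto_cutDist_atTop_zero_iff Wn
  · simp_rw [tendsto_cutDist_zero_iff hWn fun _ => hW, ← tendsto_iff_dist_tendsto_zero]
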